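/- Let g_i : ℝ² → [0,1], 1 ≤ i ≤ I, be C^r functions with supp(g_i) ⊂ Q and Σ_{i=1}^I g_i(x) ≤ 1 for all x ∈ Q, and let Θ and Θ' be polarizations with Θ' < Θ. Then (Σ_{i=1}^I ‖g_i·u‖²_{Θ'})^{1/2} ≤ C₀·‖u‖_Θ + C·|u|_Θ for all u ∈ C^r(R), where C₀ is a constant not depending on the family {g_i} while C may depend on it. If moreover Σ_{i=1}^I g_i(x) = 1 for all x ∈ R, then also ‖u‖_{Θ'} ≤ ν·(Σ_{i=1}^I ‖g_i·u‖²_Θ)^{1/2} + C·Σ_{i=1}^I |g_i·u|_Θ for all u ∈ C^r(R), where ν is the intersection multiplicity of the supports of the functions g_i. -/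

import Mathlib

noncomputable section
open MeasureTheory Filter Finset Function Set Real Topology
open scoped ENNReal NNReal

namespace AngleMult

/-! ### Anisotropic Sobolev norms on `ℝ²` -/

/-- Euclidean magnitude on `ℝ × ℝ`. -/
def en (v : ℝ × ℝ) : ℝ := Real.sqrt (v.1 ^ 2 + v.2 ^ 2)

/-- Fourier transform on `ℝ²`. -/
def FT (u : ℝ × ℝ → ℂ) (ξ : ℝ × ℝ) : ℂ :=
  ∫ x : ℝ × ℝ, Complex.exp (-(2 * Real.pi * (x.1 * ξ.1 + x.2 * ξ.2)) * Complex.I) * u x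

/-- Inverse Fourier transform on `ℝ²`. -/
def invFT (u : ℝ × ℝ → ℂ) (x : ℝ × ℝ) : ℂ :=
  ∫ ξ : ℝ × ℝ, Complex.exp ((2 * Real.pi * (x.1 * ξ.1 + x.2 * ξ.2)) * Complex.I) * u ξ

/-- The rectangle `R = (-η,η) × (δ,2δ)`. -/
def Rset (η δ : ℝ) : Set (ℝ × ℝ) := Set.Ioo (-η) η ×ˢ Set.Ioo δ (2 * δ)

/-- The rectangle `Q = (-2η,2η) × (0,3δ)`. -/
def Qset (η δ : ℝ) : Set (ℝ × ℝ) := Set.Ioo (-(2 * η)) (2 * η) ×ˢ Set.Ioo 0 (3 * δ)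

/-- `C ⋐ C'`: the closure of `C` is contained in the interior of `C'` except for the
origin. -/
def Csub (C C' : Set (ℝ × ℝ)) : Prop := closure C \ {0} ⊆ interior C'

/-- A polarization `Θ = (C₊, C₋, φ₊, φ₋)`: a pair of closed cones intersecting only at `0`
together with smooth functions on the unit circle (encoded as positively homogeneous
functions of degree `0` on `ℝ² ∖ {0}`) adapted to them. -/
structure Polarization where
  Cp : Set (ℝ × ℝ)
  Cm : Set (ℝ × ℝ)
  phip : ℝ × ℝ → ℝ
  phim : ℝ × ℝ → ℝ
  closed_p : IsClosed Cp
  closed_m : IsClosed Cm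
  cone_p : ∀ (c : ℝ) v, v ∈ Cp → c • v ∈ Cp
  cone_m : ∀ (c : ℝ) v, v ∈ Cm → c • v ∈ Cm
  inter_eq : Cp ∩ Cm = {0}
  smooth_p : ContDiffOn ℝ (⊤ : ℕ∞) phip {v : ℝ × ℝ | v ≠ 0}
  smooth_m : ContDiffOn ℝ (⊤ : ℕ∞) phim {v : ℝ × ℝ | v ≠ 0}
  homog_p : ∀ c : ℝ, 0 < c → ∀ v, phip (c • v) = phip v
  mem_Icc_p : ∀ v, phip v ∈ Set.Icc (0 : ℝ) 1
  one_on_p : ∀ v ∈ Cp, v ≠ 0 → phip v = 1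
  zero_on_m : ∀ v ∈ Cm, v ≠ 0 → phip v = 0
  phim_def : ∀ v, phim v = 1 - phip v

/-- The order `Θ < Θ'` on polarizations: `ℝ² ∖ C'₊ ⋐ C₋`. -/
def PolLt (Θ Θ' : Polarization) : Prop := Csub (Set.univ \ Θ'.Cp) Θ.Cm

/-- Admissibility of the fixed bump function `χ`. -/
def ChiOK (χ : ℝ → ℝ) : Prop :=
  ContDiff ℝ (⊤ : ℕ∞) χ ∧ (∀ s ≤ (1 : ℝ), χ s = 1) ∧ (∀ s, (2 : ℝ) ≤ s → χ s = 0) ∧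
    ∀ s, χ s ∈ Set.Icc (0 : ℝ) 1

/-- The Littlewood-Paley functions `ψ_{Θ,n,σ}` (`σ = true` is `+`, `σ = false` is `-`). -/
def psiLP (χ : ℝ → ℝ) (Θ : Polarization) (n : ℕ) (σ : Bool) (ξ : ℝ × ℝ) : ℝ :=
  if n = 0 then χ (en ξ) / 2
  else (if σ then Θ.phip ξ else Θ.phim ξ) *
    (χ ((2 : ℝ) ^ (-(n : ℤ)) * en ξ) - χ ((2 : ℝ) ^ (-(n : ℤ) + 1) * en ξ))

/-- The pseudo-differential operator `ψ_{Θ,n,σ}(D) u = 𝓕⁻¹(ψ_{Θ,n,σ} · 𝓕u)`. -/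
def psiD (χ : ℝ → ℝ) (Θ : Polarization) (n : ℕ) (σ : Bool) (u : ℝ × ℝ → ℂ) :
    ℝ × ℝ → ℂ :=
  invFT fun ξ => (psiLP χ Θ n σ ξ : ℂ) * FT u ξ

/-- The partial norm `‖u‖^σ_{Θ,p} = (∑_n 2^{2pn} ‖ψ_{Θ,n,σ}·𝓕u‖²_{L²})^{1/2}`
(`ℝ≥0∞`-valued). -/
def segNorm (χ : ℝ → ℝ) (Θ : Polarization) (p : ℝ) (σ : Bool) (u : ℝ × ℝ → ℂ) : ℝ≥0∞ :=
  (∑' n : ℕ, ENNReal.ofReal ((2 : ℝ) ^ (2 * p * (n : ℝ))) *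
      (eLpNorm (fun ξ => (psiLP χ Θ n σ ξ : ℂ) * FT u ξ) 2 volume) ^ 2) ^ (1 / 2 : ℝ)

/-- The anisotropic Sobolev norm `‖u‖_{Θ,p,q}`. -/
def anorm (χ : ℝ → ℝ) (Θ : Polarization) (p q : ℝ) (u : ℝ × ℝ → ℂ) : ℝ≥0∞ :=
  ((segNorm χ Θ p true u) ^ 2 + (segNorm χ Θ q false u) ^ 2) ^ (1 / 2 : ℝ)

/-- The (usual) Sobolev norm of order `s` of `u`, via the Fourier transform. -/
def wnorm (s : ℝ) (u : ℝ × ℝ → ℂ) : ℝ≥0∞ :=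
  eLpNorm (fun ξ => ((1 + en ξ ^ 2) ^ (s / 2) : ℝ) * FT u ξ) 2 volume

/-- `u ∈ C^r(R)`: a `C^r` function supported in `R`. -/
def CrSupp (r : ℕ) (η δ : ℝ) (u : ℝ × ℝ → ℂ) : Prop :=
  ContDiff ℝ r u ∧ Function.support u ⊆ Rset η δ

/-- `u ∈ C^∞(R)`: a `C^∞` function supported in `R`. -/
def SmoothSupp (η δ : ℝ) (u : ℝ × ℝ → ℂ) : Prop :=
  ContDiff ℝ (⊤ : ℕ∞) u ∧ Function.support u ⊆ Rset η δ

/-!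
By Plancherel, each anisotropic norm is `‖a û‖_{L²}` for the symbol
`a = (∑_{n,σ} (2^{c_σ n} ψ_{n,σ})²)^{1/2}`; let `b'`, `b`, `m` be the symbols of `‖·‖_{Θ'}`,
`‖·‖_Θ`, `|·|_Θ`. Multiplication by `w` is convolution of `û` by `ŵ`, so the commutator of `w` with
the Fourier multiplier `b'` has kernel `(b' ξ - b' ζ) ŵ (ξ - ζ)`. It is of lower order, because
`|b' ξ - b' ζ| ≤ C (1 + |ξ - ζ|)^s m ζ` for some `s < 2`, and `(1 + |ξ|)^s ŵ` is integrable for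
`w ∈ C³`.

The increment bound is a matter of cones. On `C₊` of `Θ` the symbol `m` is bounded below, and `b'`
is Lipschitz. Off that cone `m ζ ≳ (1 + |ζ|)^q` only, but there `Θ' < Θ` makes `b'` a symbol of
order `0` in a conic neighbourhood of `ζ`, which gains a factor `(1 + |ζ|)⁻¹ ≤ (1 + |ζ|)^q` for
close `ξ`; for `ξ` far from `ζ` the loss is absorbed in `(1 + |ξ - ζ|)^{1-q}`. The same dichotomy
gives `b' ≤ b + 2m`.

Modulo commutators both estimates become pointwise `ℓ²` inequalities for `(wᵢ b'(D) u)ᵢ` and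
`∑ wᵢ b'(D) vᵢ`, with constant `sup (∑ wᵢ²)^{1/2}`. The first takes `wᵢ = gᵢ`, with `∑ gᵢ² ≤ 1`.
For the second write `u = ∑ wᵢ (gᵢ u)` with `wᵢ = gᵢ / ∑ gⱼ²`: if at most `ν` of the `gᵢ` are
nonzero at a point of `R` then `∑ gⱼ² ≥ 1/ν` there, and a smooth truncation of `t ↦ 1/t` between
`1/ν²` and `1/ν` extends the weights with `∑ wᵢ² ≤ ν²`.
-/

/-! ### The Fourier transform -/

section Plancherel

open FourierTransform SchwartzMap

variable {V F : Type*} [NormedAddCommGroup V] [InnerProductSpace ℝ V] [FiniteDimensional ℝ V]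
  [MeasurableSpace V] [BorelSpace V] [NormedAddCommGroup F] [InnerProductSpace ℂ F]
  [CompleteSpace F]

lemma fourier_toLp_ae_eq {f : V → F} (hf₁ : Integrable f) (hf₂ : MemLp f 2) :
    𝓕 f =ᵐ[volume] (𝓕 (hf₂.toLp f) : Lp (α := V) F 2 volume) := by
  have hinner : Continuous fun p : V × V => innerₗ V p.1 p.2 := continuous_inner
  have hcont : Continuous (𝓕 f) :=
    VectorFourier.fourierIntegral_continuous Real.continuous_fourierChar hinner hf₁
  refine ae_eq_of_integral_contDiff_smul_eq hcont.locallyIntegrable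
    ((Lp.memLp _).locallyIntegrable (by norm_num)) fun g hg hgc => ?_
  have hgc' : HasCompactSupport fun x => (g x : ℂ) := hgc.comp_left (g := ((↑) : ℝ → ℂ)) rfl
  let G : 𝓢(V, ℂ) := hgc'.toSchwartzMap (Complex.ofRealCLM.contDiff.comp hg)
  have hG (h : V → F) : ∫ x, g x • h x = ∫ x, G x • h x :=
    integral_congr_ae <| .of_forall fun x => (Complex.coe_smul (g x) (h x)).symm
  have hLp : ∫ x, 𝓕 G x • hf₂.toLp f x =
      ∫ x, G x • (𝓕 (hf₂.toLp f) : Lp (α := V) F 2 volume) x := by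
    simpa only [TemperedDistribution.fourier_apply, Lp.toTemperedDistribution_apply] using
      congrArg (fun T => T G) (Lp.fourier_toTemperedDistribution_eq (hf₂.toLp f))
  have hae : ∫ x, 𝓕 G x • hf₂.toLp f x = ∫ x, 𝓕 G x • f x :=
    integral_congr_ae <| hf₂.coeFn_toLp.mono fun x hx => by simp only [hx]
  have hflip : ∫ x, 𝓕 G x • f x = ∫ x, G x • 𝓕 f x := by
    have := VectorFourier.integral_fourierIntegral_smul_eq_flip (μ := (volume : Measure V))
      (ν := (volume : Measure V)) Real.continuous_fourierChar hinner G.integrable hf₁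
    rwa [flip_innerₗ] at this
  rw [hG, hG, ← hflip, ← hae, hLp]

lemma eLpNorm_fourier_eq {f : V → F} (hf₁ : Integrable f) (hf₂ : MemLp f 2) :
    eLpNorm (𝓕 f) 2 volume = eLpNorm f 2 volume := by
  rw [eLpNorm_congr_ae (fourier_toLp_ae_eq hf₁ hf₂), ← Lp.enorm_def,
    ← eLpNorm_congr_ae hf₂.coeFn_toLp, ← Lp.enorm_def, ← ofReal_norm, ← ofReal_norm,
    Lp.norm_fourier_eq]

end Plancherel

section IntegralKernel

open scoped FourierTransform

variable {u f g : ℝ × ℝ → ℂ}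

/-- The Euclidean bilinear form `(x, ξ) ↦ x₁ξ₁ + x₂ξ₂` on `ℝ × ℝ`, which carries the sup norm and
hence no inner product; it presents `FT` as a `VectorFourier.fourierIntegral`. -/
def pairing : (ℝ × ℝ) →L[ℝ] (ℝ × ℝ) →L[ℝ] ℝ :=
  (ContinuousLinearMap.mul ℝ ℝ).bilinearComp (.fst ℝ ℝ ℝ) (.fst ℝ ℝ ℝ) +
    (ContinuousLinearMap.mul ℝ ℝ).bilinearComp (.snd ℝ ℝ ℝ) (.snd ℝ ℝ ℝ)

lemma pairing_apply (x ξ : ℝ × ℝ) : pairing x ξ = x.1 * ξ.1 + x.2 * ξ.2 := rfl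

lemma FT_eq_fourierIntegral (u : ℝ × ℝ → ℂ) :
    FT u = VectorFourier.fourierIntegral 𝐞 volume pairing.toLinearMap₁₂ u := by
  ext ξ
  refine integral_congr_ae (.of_forall fun x => ?_)
  change _ = 𝐞 (-(x.1 * ξ.1 + x.2 * ξ.2)) • u x
  simp only [Circle.smul_def, fourierChar_apply, smul_eq_mul]
  push_cast
  ring_nf

lemma invFT_eq_fourierIntegral (u : ℝ × ℝ → ℂ) :
    invFT u = VectorFourier.fourierIntegral 𝐞 volume (-pairing).toLinearMap₁₂.flip u := by
  ext x
  refine integral_congr_ae (.of_forall fun ξ => ?_)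
  change _ = 𝐞 (-(-(x.1 * ξ.1 + x.2 * ξ.2))) • u ξ
  simp only [Circle.smul_def, fourierChar_apply, smul_eq_mul]
  push_cast
  ring_nf

lemma invFT_apply_eq_FT_neg (u : ℝ × ℝ → ℂ) (x : ℝ × ℝ) : invFT u x = FT u (-x) := by
  refine integral_congr_ae (.of_forall fun ξ => ?_)
  simp only [Prod.fst_neg, Prod.snd_neg]
  push_cast
  ring_nf

lemma FT_apply_eq_fourier (u : ℝ × ℝ → ℂ) (ξ : ℝ × ℝ) :
    FT u ξ = 𝓕 (fun x : WithLp 2 (ℝ × ℝ) => u x.ofLp) (.toLp 2 ξ) := by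
  rw [Real.fourier_eq', FT, ← (WithLp.volume_preserving_ofLp ℝ ℝ).integral_comp
    (MeasurableEquiv.toLp 2 (ℝ × ℝ)).symm.measurableEmbedding]
  refine integral_congr_ae (.of_forall fun x => ?_)
  simp only [WithLp.prod_inner_apply, RCLike.inner_apply, conj_trivial, smul_eq_mul]
  push_cast
  ring_nf

lemma continuous_FT (hu : Integrable u) : Continuous (FT u) :=
  FT_eq_fourierIntegral u ▸ VectorFourier.fourierIntegral_continuous
    Real.continuous_fourierChar pairing.continuous₂ hu

lemma continuous_invFT (hu : Integrable u) : Continuous (invFT u) :=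
  (funext (invFT_apply_eq_FT_neg u) : invFT u = FT u ∘ Neg.neg) ▸
    (continuous_FT hu).comp continuous_neg

lemma norm_FT_le (u : ℝ × ℝ → ℂ) (ξ : ℝ × ℝ) : ‖FT u ξ‖ ≤ ∫ x, ‖u x‖ :=
  FT_eq_fourierIntegral u ▸ VectorFourier.norm_fourierIntegral_le_integral_norm ..

lemma FT_sum {ι : Type*} {s : Finset ι} {f : ι → ℝ × ℝ → ℂ} (hf : ∀ i ∈ s, Integrable (f i)) :
    FT (fun x => ∑ i ∈ s, f i x) = fun ξ => ∑ i ∈ s, FT (f i) ξ := by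
  ext ξ
  simp only [FT_eq_fourierIntegral, VectorFourier.fourierIntegral, Finset.smul_sum]
  exact integral_finsetSum _ fun i hi => (VectorFourier.fourierIntegral_convergent_iff
    Real.continuous_fourierChar pairing.continuous₂ ξ).2 (hf i hi)

lemma FT_fderiv_apply (hu : Integrable u) (hu' : Differentiable ℝ u)
    (hu'' : Integrable (fderiv ℝ u)) (v ξ : ℝ × ℝ) :
    FT (fun x => fderiv ℝ u x v) ξ = 2 * π * Complex.I * pairing v ξ * FT u ξ := by
  have hinst := VectorFourier.fourierIntegral_fderiv pairing (μ := volume) hu hu' hu''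
  rw [FT_eq_fourierIntegral, ← Real.fourierIntegral_continuousLinearMap_apply' hu'', hinst,
    VectorFourier.fourierSMulRight_apply, FT_eq_fourierIntegral]
  simp only [neg_apply, ContinuousLinearMap.flip_apply, neg_smul,
    Complex.real_smul, smul_eq_mul]
  ring

lemma eLpNorm_FT (hu₁ : Integrable u) (hu₂ : MemLp u 2) :
    eLpNorm (FT u) 2 volume = eLpNorm u 2 volume := by
  have hofLp := WithLp.volume_preserving_ofLp ℝ ℝ
  have hcomp : FT u = fun ξ => 𝓕 (u ∘ WithLp.ofLp (p := 2)) (.toLp 2 ξ) :=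
    funext (FT_apply_eq_fourier u)
  have hFT : FT u ∘ WithLp.ofLp (p := 2) = 𝓕 (u ∘ WithLp.ofLp (p := 2)) := by
    rw [hcomp]
    rfl
  rw [← eLpNorm_comp_measurePreserving (continuous_FT hu₁).aestronglyMeasurable hofLp, hFT,
    eLpNorm_fourier_eq (hofLp.integrable_comp_of_integrable hu₁)
      (hu₂.comp_measurePreserving hofLp), eLpNorm_comp_measurePreserving hu₂.1 hofLp]

lemma memLp_two_FT (hu₁ : Integrable u) (hu₂ : MemLp u 2) : MemLp (FT u) 2 :=
  ⟨(continuous_FT hu₁).aestronglyMeasurable, eLpNorm_FT hu₁ hu₂ ▸ hu₂.2⟩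

lemma eLpNorm_invFT (hu₁ : Integrable u) (hu₂ : MemLp u 2) :
    eLpNorm (invFT u) 2 volume = eLpNorm u 2 volume := by
  rw [funext (invFT_apply_eq_FT_neg u), ← eLpNorm_FT hu₁ hu₂]
  exact eLpNorm_comp_measurePreserving (continuous_FT hu₁).aestronglyMeasurable
    (Measure.measurePreserving_neg volume)

lemma invFT_FT (hc : Continuous u) (hu : Integrable u) (hFu : Integrable (FT u)) :
    invFT (FT u) = u := by
  have hofLp := WithLp.volume_preserving_ofLp ℝ ℝ
  have hFT : FT u ∘ WithLp.ofLp (p := 2) = 𝓕 (u ∘ WithLp.ofLp (p := 2)) :=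
    funext fun ξ => FT_apply_eq_fourier u ξ.ofLp
  have hinv := (hc.comp (WithLp.prod_continuous_ofLp 2 ℝ ℝ)).fourierInv_fourier_eq
    (hofLp.integrable_comp_of_integrable hu) (hFT ▸ hofLp.integrable_comp_of_integrable hFu)
  ext x
  have hx := congrFun hinv (.toLp 2 x)
  rwa [← hFT, Real.fourierInv_eq_fourier_neg, ← WithLp.toLp_neg, Function.comp_def,
    ← FT_apply_eq_fourier, ← invFT_apply_eq_FT_neg] at hx

/-- The modulation `x ↦ e^{-2πi⟨x, ξ⟩} g x` reduces this to the self-adjointness of the Fourier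
integral. -/
lemma FT_mul_invFT (hg : Integrable g) (hf : Integrable f) (ξ : ℝ × ℝ) :
    FT (fun x => g x * invFT f x) ξ = ∫ ζ, FT g (ξ - ζ) * f ζ := by
  have hmod : Integrable fun x => 𝐞 (-pairing.toLinearMap₁₂ x ξ) • g x :=
    (VectorFourier.fourierIntegral_convergent_iff Real.continuous_fourierChar
      pairing.continuous₂ ξ).2 hg
  have hshift (ζ : ℝ × ℝ) : VectorFourier.fourierIntegral 𝐞 volume (-pairing).toLinearMap₁₂
      (fun x => 𝐞 (-pairing.toLinearMap₁₂ x ξ) • g x) ζ = FT g (ξ - ζ) := by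
    rw [FT_eq_fourierIntegral]
    refine integral_congr_ae (.of_forall fun x => ?_)
    change 𝐞 (-(-pairing x ζ)) • 𝐞 (-pairing x ξ) • g x = 𝐞 (-pairing x (ξ - ζ)) • g x
    rw [smul_smul, ← AddChar.map_add_eq_mul, map_sub]
    ring_nf
  have hflip := VectorFourier.integral_fourierIntegral_smul_eq_flip (L := (-pairing).toLinearMap₁₂)
    Real.continuous_fourierChar (-pairing).continuous₂ hmod hf
  simp only [hshift, ← invFT_eq_fourierIntegral, smul_eq_mul] at hflip
  rw [hflip, FT_eq_fourierIntegral]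
  simp only [VectorFourier.fourierIntegral, smul_mul_assoc]

end IntegralKernel

/-! ### `L²` inequalities -/

section EllTwo

variable {ι : Type*} [Fintype ι] {a b : ι → ℝ≥0∞}

/-- The `ℓ²` norm of a finite family of extended nonnegative reals, which combines the norms of the
members of a finite family of functions. -/
def ellTwo (a : ι → ℝ≥0∞) : ℝ≥0∞ := (∑ i, a i ^ 2) ^ (1 / 2 : ℝ)

lemma ellTwo_sq (a : ι → ℝ≥0∞) : ellTwo a ^ 2 = ∑ i, a i ^ 2 := by
  rw [ellTwo, ← ENNReal.rpow_natCast, ← ENNReal.rpow_mul]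
  norm_num

lemma ellTwo_le_iff {c : ℝ≥0∞} : ellTwo a ≤ c ↔ ∑ i, a i ^ 2 ≤ c ^ 2 := by
  rw [← ellTwo_sq, ENNReal.pow_le_pow_left_iff two_ne_zero]

lemma ellTwo_mono (h : ∀ i, a i ≤ b i) : ellTwo a ≤ ellTwo b := by
  unfold ellTwo
  gcongr
  exact h _

lemma ellTwo_add_le (a b : ι → ℝ≥0∞) : ellTwo (fun i => a i + b i) ≤ ellTwo a + ellTwo b := by
  simpa only [ellTwo, ENNReal.rpow_ofNat] using ENNReal.Lp_add_le univ a b one_le_two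

lemma ellTwo_le_sum (a : ι → ℝ≥0∞) : ellTwo a ≤ ∑ i, a i :=
  ellTwo_le_iff.2 (Finset.sum_sq_le_sq_sum_of_nonneg fun _ _ => zero_le)

lemma sum_mul_le_ellTwo_mul_ellTwo (a b : ι → ℝ≥0∞) : ∑ i, a i * b i ≤ ellTwo a * ellTwo b := by
  simpa only [ellTwo, ENNReal.rpow_ofNat] using
    ENNReal.inner_le_Lp_mul_Lq univ a b Real.HolderConjugate.two_two

end EllTwo

section LTwo

variable {α : Type*} [MeasurableSpace α] {μ : Measure α}

lemma eLpNorm_two_sq {E : Type*} [NormedAddCommGroup E] (f : α → E) :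
    eLpNorm f 2 μ ^ 2 = ∫⁻ x, ‖f x‖ₑ ^ 2 ∂μ := by
  simpa using eLpNorm_nnreal_pow_eq_lintegral (f := f) (μ := μ) (p := 2) two_ne_zero

lemma eLpNorm_two_le_iff {E : Type*} [NormedAddCommGroup E] {f : α → E} {c : ℝ≥0∞} :
    eLpNorm f 2 μ ≤ c ↔ ∫⁻ x, ‖f x‖ₑ ^ 2 ∂μ ≤ c ^ 2 := by
  rw [← eLpNorm_two_sq, ENNReal.pow_le_pow_left_iff two_ne_zero]

lemma lintegral_mul_sq_le {k f : α → ℝ≥0∞} (hk : AEMeasurable k μ) (hf : AEMeasurable f μ) :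
    (∫⁻ x, k x * f x ∂μ) ^ 2 ≤ (∫⁻ x, k x ∂μ) * ∫⁻ x, k x * f x ^ 2 ∂μ := by
  have hsq (y : ℝ≥0∞) : (y ^ (1 / 2 : ℝ)) ^ 2 = y := by
    rw [← ENNReal.rpow_natCast, ← ENNReal.rpow_mul]
    norm_num
  have hmul (x : α) : k x ^ (1 / 2 : ℝ) * (k x ^ (1 / 2 : ℝ) * f x) = k x * f x := by
    rw [← mul_assoc, ← sq, hsq]
  have hölder := ENNReal.lintegral_mul_le_Lp_mul_Lq μ Real.HolderConjugate.two_two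
    (hk.pow_const (1 / 2 : ℝ)) ((hk.pow_const (1 / 2 : ℝ)).mul hf)
  simp only [Pi.mul_apply, hmul, ENNReal.rpow_ofNat, mul_pow, hsq] at hölder
  simpa only [mul_pow, hsq] using pow_le_pow_left' hölder 2

variable {𝕜 ι : Type*} [NormedField 𝕜] [Fintype ι] {w : ι → α → 𝕜} {A : ℝ≥0}

lemma ellTwo_eLpNorm_mul_le {F : α → 𝕜} (hw : ∀ x, ∑ i, ‖w i x‖ₑ ^ 2 ≤ (A : ℝ≥0∞) ^ 2)
    (hwF : ∀ i, AEStronglyMeasurable (fun x => w i x * F x) μ) :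
    ellTwo (fun i => eLpNorm (fun x => w i x * F x) 2 μ) ≤ A * eLpNorm F 2 μ := by
  rw [ellTwo_le_iff, mul_pow, eLpNorm_two_sq]
  simp only [eLpNorm_two_sq]
  calc ∑ i, ∫⁻ x, ‖w i x * F x‖ₑ ^ 2 ∂μ
      = ∫⁻ x, (∑ i, ‖w i x‖ₑ ^ 2) * ‖F x‖ₑ ^ 2 ∂μ := by
        rw [← lintegral_finsetSum' _ fun i _ => (hwF i).enorm.pow_const 2]
        simp only [enorm_mul, mul_pow, Finset.sum_mul]
    _ ≤ ∫⁻ x, A ^ 2 * ‖F x‖ₑ ^ 2 ∂μ := by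
        gcongr with x
        exact hw x
    _ = A ^ 2 * ∫⁻ x, ‖F x‖ₑ ^ 2 ∂μ := lintegral_const_mul' _ _ (by finiteness)

lemma eLpNorm_sum_mul_le {F : ι → α → 𝕜} (hw : ∀ x, ∑ i, ‖w i x‖ₑ ^ 2 ≤ (A : ℝ≥0∞) ^ 2)
    (hF : ∀ i, AEStronglyMeasurable (F i) μ) :
    eLpNorm (fun x => ∑ i, w i x * F i x) 2 μ ≤ A * ellTwo fun i => eLpNorm (F i) 2 μ := by
  have hpt (x : α) : ‖∑ i, w i x * F i x‖ₑ ≤ A * ellTwo fun i => ‖F i x‖ₑ :=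
    calc ‖∑ i, w i x * F i x‖ₑ ≤ ∑ i, ‖w i x‖ₑ * ‖F i x‖ₑ := by
          simpa only [enorm_mul] using enorm_sum_le univ fun i => w i x * F i x
      _ ≤ ellTwo (fun i => ‖w i x‖ₑ) * ellTwo fun i => ‖F i x‖ₑ :=
          sum_mul_le_ellTwo_mul_ellTwo _ _
      _ ≤ A * ellTwo fun i => ‖F i x‖ₑ := by
          gcongr
          exact ellTwo_le_iff.2 (hw x)
  rw [eLpNorm_two_le_iff, mul_pow, ellTwo_sq]
  calc ∫⁻ x, ‖∑ i, w i x * F i x‖ₑ ^ 2 ∂μ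
      ≤ ∫⁻ x, A ^ 2 * ∑ i, ‖F i x‖ₑ ^ 2 ∂μ := by
        gcongr with x
        simpa only [mul_pow, ellTwo_sq] using pow_le_pow_left' (hpt x) 2
    _ = A ^ 2 * ∑ i, eLpNorm (F i) 2 μ ^ 2 := by
        simp only [eLpNorm_two_sq]
        rw [lintegral_const_mul' _ _ (by finiteness),
          lintegral_finsetSum' _ fun i _ => (hF i).enorm.pow_const 2]

end LTwo

lemma lintegral_convolution_sq_le {G : Type*} [AddCommGroup G] [MeasurableSpace G]
    [MeasurableAdd₂ G] [MeasurableNeg G] {μ : Measure G} [SFinite μ] [μ.IsAddLeftInvariant]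
    [μ.IsNegInvariant] {k f : G → ℝ≥0∞} (hk : Measurable k) (hf : Measurable f) :
    ∫⁻ ξ, (∫⁻ ζ, k (ξ - ζ) * f ζ ∂μ) ^ 2 ∂μ ≤ (∫⁻ ζ, k ζ ∂μ) ^ 2 * ∫⁻ ζ, f ζ ^ 2 ∂μ := by
  have hmeas : Measurable fun p : G × G => k (p.1 - p.2) * f p.2 ^ 2 := by fun_prop
  calc ∫⁻ ξ, (∫⁻ ζ, k (ξ - ζ) * f ζ ∂μ) ^ 2 ∂μ
      ≤ ∫⁻ ξ, (∫⁻ ζ, k ζ ∂μ) * ∫⁻ ζ, k (ξ - ζ) * f ζ ^ 2 ∂μ ∂μ := lintegral_mono fun ξ => by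
        simpa only [lintegral_sub_left_eq_self k ξ] using
          lintegral_mul_sq_le (μ := μ) (k := fun ζ => k (ξ - ζ)) (by fun_prop) hf.aemeasurable
    _ = (∫⁻ ζ, k ζ ∂μ) * ∫⁻ ζ, ∫⁻ ξ, k (ξ - ζ) * f ζ ^ 2 ∂μ ∂μ := by
        rw [lintegral_const_mul _ hmeas.lintegral_prod_right',
          lintegral_lintegral_swap hmeas.aemeasurable]
    _ = (∫⁻ ζ, k ζ ∂μ) * ∫⁻ ζ, (∫⁻ ξ, k ξ ∂μ) * f ζ ^ 2 ∂μ := by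
        congr! 3 with ζ
        rw [lintegral_mul_const _ (by fun_prop), lintegral_sub_right_eq_self k ζ]
    _ = (∫⁻ ζ, k ζ ∂μ) ^ 2 * ∫⁻ ζ, f ζ ^ 2 ∂μ := by
        rw [lintegral_const_mul _ (by fun_prop), ← mul_assoc, sq]

/-! ### Compactly supported functions of finite smoothness -/

/-- `u` is a compactly supported function of class `C^n`. -/
structure ContDiffCompact {E F : Type*} [NormedAddCommGroup E] [NormedSpace ℝ E]
    [NormedAddCommGroup F] [NormedSpace ℝ F] (n : ℕ) (u : E → F) : Prop where
  contDiff : ContDiff ℝ n u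
  hasCompactSupport : HasCompactSupport u

namespace ContDiffCompact

section General

variable {E F : Type*} [NormedAddCommGroup E] [NormedSpace ℝ E] [NormedAddCommGroup F]
  [NormedSpace ℝ F] {n : ℕ} {u : E → F}

lemma of_support_subset [ProperSpace E] {s : Set E} (hu : ContDiff ℝ n u) (hus : support u ⊆ s)
    (hs : Bornology.IsBounded s) : ContDiffCompact n u :=
  ⟨hu, .of_support_subset_isCompact hs.isCompact_closure (hus.trans subset_closure)⟩

lemma continuous (hu : ContDiffCompact n u) : Continuous u := hu.contDiff.continuous

lemma integrable [MeasurableSpace E] [OpensMeasurableSpace E] {μ : Measure E}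
    [IsFiniteMeasureOnCompacts μ] (hu : ContDiffCompact n u) : Integrable u μ :=
  hu.continuous.integrable_of_hasCompactSupport hu.hasCompactSupport

lemma memLp [MeasurableSpace E] [OpensMeasurableSpace E] {μ : Measure E}
    [IsFiniteMeasureOnCompacts μ] {p : ℝ≥0∞} (hu : ContDiffCompact n u) : MemLp u p μ :=
  hu.continuous.memLp_of_hasCompactSupport hu.hasCompactSupport

lemma fderiv (hu : ContDiffCompact (n + 1) u) : ContDiffCompact n (fderiv ℝ u) :=
  ⟨hu.contDiff.fderiv_right (by push_cast; rfl), hu.hasCompactSupport.fderiv ℝ⟩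

lemma fderiv_apply (hu : ContDiffCompact (n + 1) u) (v : E) :
    ContDiffCompact n fun x => _root_.fderiv ℝ u x v :=
  ⟨hu.fderiv.contDiff.clm_apply contDiff_const, hu.hasCompactSupport.fderiv_apply ℝ v⟩

lemma mul {A : Type*} [NormedRing A] [NormedAlgebra ℝ A] {u v : E → A} (hu : ContDiffCompact n u)
    (hv : ContDiffCompact n v) : ContDiffCompact n fun x => u x * v x :=
  ⟨hu.contDiff.mul hv.contDiff, hv.hasCompactSupport.mul_left⟩

lemma ofReal {u : E → ℝ} (hu : ContDiffCompact n u) : ContDiffCompact n fun x => (u x : ℂ) :=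
  ⟨Complex.ofRealCLM.contDiff.comp hu.contDiff,
    hu.hasCompactSupport.comp_left (g := ((↑) : ℝ → ℂ)) rfl⟩

end General

variable {n : ℕ} {u : ℝ × ℝ → ℂ}

lemma memLp_FT (hu : ContDiffCompact n u) : MemLp (FT u) 2 := memLp_two_FT hu.integrable hu.memLp

lemma norm_pairing_mul_norm_FT_le (hu : ContDiffCompact (n + 1) u) (v ξ : ℝ × ℝ) :
    |pairing v ξ| * ‖FT u ξ‖ ≤ ‖FT (fun x => _root_.fderiv ℝ u x v) ξ‖ := by
  rw [FT_fderiv_apply hu.integrable (hu.contDiff.differentiable (by simp)) hu.fderiv.integrable]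
  simp only [norm_mul, Complex.norm_real, Complex.norm_I, mul_one, Complex.norm_ofNat]
  have hπ : 1 ≤ 2 * ‖π‖ := by
    rw [Real.norm_of_nonneg Real.pi_nonneg]
    linarith [Real.two_le_pi]
  gcongr
  exact le_mul_of_one_le_left (abs_nonneg _) hπ

lemma one_add_norm_mul_norm_FT_le (hu : ContDiffCompact (n + 1) u) (ξ : ℝ × ℝ) :
    (1 + ‖ξ‖) * ‖FT u ξ‖ ≤ ‖FT u ξ‖ + ‖FT (fun x => _root_.fderiv ℝ u x (1, 0)) ξ‖ +
      ‖FT (fun x => _root_.fderiv ℝ u x (0, 1)) ξ‖ := by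
  have h₁ : |ξ.1| * ‖FT u ξ‖ ≤ ‖FT (fun x => _root_.fderiv ℝ u x (1, 0)) ξ‖ := by
    simpa [pairing_apply] using hu.norm_pairing_mul_norm_FT_le (1, 0) ξ
  have h₂ : |ξ.2| * ‖FT u ξ‖ ≤ ‖FT (fun x => _root_.fderiv ℝ u x (0, 1)) ξ‖ := by
    simpa [pairing_apply] using hu.norm_pairing_mul_norm_FT_le (0, 1) ξ
  have hnorm : ‖ξ‖ ≤ |ξ.1| + |ξ.2| :=
    max_le (le_add_of_nonneg_right (abs_nonneg _)) (le_add_of_nonneg_left (abs_nonneg _))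
  linarith [mul_le_mul_of_nonneg_right hnorm (norm_nonneg (FT u ξ))]

lemma memLp_one_add_norm_pow_mul_FT (hu : ContDiffCompact n u) :
    MemLp (fun ξ => ((1 + ‖ξ‖) ^ n : ℝ) * FT u ξ) 2 := by
  induction n generalizing u with
  | zero => simpa using hu.memLp_FT
  | succ n ih =>
    have hFu := continuous_FT hu.integrable
    have hn : ContDiffCompact n u := ⟨hu.contDiff.of_le (by simp), hu.hasCompactSupport⟩
    refine (((ih hn).norm.add (ih (hu.fderiv_apply (1, 0))).norm).add
      (ih (hu.fderiv_apply (0, 1))).norm).mono' (by fun_prop) (.of_forall fun ξ => ?_)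
    have hpos : 0 ≤ (1 + ‖ξ‖) ^ n := by positivity
    have hstep := mul_le_mul_of_nonneg_left (hu.one_add_norm_mul_norm_FT_le ξ) hpos
    simp only [Pi.add_apply, norm_mul, Complex.norm_real, norm_pow,
      Real.norm_of_nonneg (show 0 ≤ 1 + ‖ξ‖ by positivity)]
    linarith [show (1 + ‖ξ‖) ^ n * ((1 + ‖ξ‖) * ‖FT u ξ‖) = (1 + ‖ξ‖) ^ (n + 1) * ‖FT u ξ‖ by ring]

end ContDiffCompact

lemma memLp_two_one_add_norm_rpow {E : Type*} [NormedAddCommGroup E] [NormedSpace ℝ E]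
    [FiniteDimensional ℝ E] [MeasurableSpace E] [BorelSpace E] {μ : Measure E}
    [μ.IsAddHaarMeasure] {s : ℝ} (hs : Module.finrank ℝ E < 2 * s) :
    MemLp (fun x : E => (((1 + ‖x‖) ^ (-s) : ℝ) : ℂ)) 2 μ := by
  have hmeas : Measurable fun x : E => (((1 + ‖x‖) ^ (-s) : ℝ) : ℂ) := by fun_prop
  rw [memLp_two_iff_integrable_sq_norm hmeas.aestronglyMeasurable]
  refine (integrable_one_add_norm (μ := μ) hs).congr (.of_forall fun x => ?_)
  dsimp only
  rw [Complex.norm_real, Real.norm_of_nonneg (by positivity),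
    ← Real.rpow_mul_natCast (by positivity)]
  congr 1
  push_cast
  ring

lemma ContDiffCompact.integrable_one_add_norm_rpow_mul_FT {n : ℕ} {u : ℝ × ℝ → ℂ}
    (hu : ContDiffCompact n u) {s : ℝ} (hs : s + 1 < n) :
    Integrable fun ξ => ((1 + ‖ξ‖) ^ s : ℝ) * FT u ξ := by
  have hweight : MemLp (fun ξ : ℝ × ℝ => (((1 + ‖ξ‖) ^ (-(n - s)) : ℝ) : ℂ)) 2 :=
    memLp_two_one_add_norm_rpow (by simp; linarith)
  refine (hweight.integrable_mul hu.memLp_one_add_norm_pow_mul_FT).congr (.of_forall fun ξ => ?_)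
  simp only [Pi.mul_apply]
  rw [← mul_assoc, ← Complex.ofReal_mul, ← Real.rpow_natCast, ← Real.rpow_add (by positivity)]
  ring_nf

lemma ContDiffCompact.integrable_FT {n : ℕ} {u : ℝ × ℝ → ℂ} (hu : ContDiffCompact n u)
    (hn : 1 < n) : Integrable (FT u) := by
  simpa using hu.integrable_one_add_norm_rpow_mul_FT (s := 0) (by simpa using hn)

/-! ### Commutators of Fourier multipliers with weights -/

/-- The Fourier multiplier `b(D)` with real symbol `b`. -/
def fourierMultiplier (b : ℝ × ℝ → ℝ) (v : ℝ × ℝ → ℂ) : ℝ × ℝ → ℂ :=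
  invFT fun ξ => b ξ * FT v ξ

/-- The norm `‖b(D) v‖_{L²}`, computed on the Fourier side so that it makes sense for every
integrable `v`. -/
def symbolNorm (b : ℝ × ℝ → ℝ) (v : ℝ × ℝ → ℂ) : ℝ≥0∞ :=
  eLpNorm (fun ξ => (b ξ : ℂ) * FT v ξ) 2

/-- The Fourier transform of the commutator `b(D)(w v) - w b(D) v`. -/
def commutatorFT (b : ℝ × ℝ → ℝ) (w v : ℝ × ℝ → ℂ) (ξ : ℝ × ℝ) : ℂ :=
  b ξ * FT (fun x => w x * v x) ξ - FT (fun x => w x * fourierMultiplier b v x) ξ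

/-- A continuous symbol of at most linear growth, that is, of order one. -/
structure HasLinearGrowth (b : ℝ × ℝ → ℝ) : Prop where
  continuous : Continuous b
  exists_bound : ∃ L : ℝ, ∀ ξ, |b ξ| ≤ L * (1 + ‖ξ‖)

/-- The increments of the symbol `b` are controlled by the symbol `m`, with a loss in the
frequency increment that the Fourier transform of a `C³` weight on the plane can absorb. -/
def IncrementBound (b m : ℝ × ℝ → ℝ) : Prop :=
  ∃ C s : ℝ, s < 2 ∧ ∀ ξ ζ, |b ξ - b ζ| ≤ C * (1 + ‖ξ - ζ‖) ^ s * m ζ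

section Multiplier

variable {b m : ℝ × ℝ → ℝ} {v w : ℝ × ℝ → ℂ}

namespace HasLinearGrowth

lemma integrable_mul_FT (hb : HasLinearGrowth b) (hv : ContDiffCompact 3 v) :
    Integrable fun ξ => (b ξ : ℂ) * FT v ξ := by
  obtain ⟨L, hL⟩ := hb.exists_bound
  have hdecay := hv.integrable_one_add_norm_rpow_mul_FT (s := 1) (by norm_num)
  refine (hdecay.norm.const_mul L).mono'
    ((Complex.continuous_ofReal.comp hb.continuous).mul
      (continuous_FT hv.integrable)).aestronglyMeasurable (.of_forall fun ξ => ?_)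
  simp only [norm_mul, Complex.norm_real, Real.rpow_one, ← mul_assoc, Real.norm_eq_abs,
    abs_of_nonneg (show 0 ≤ 1 + ‖ξ‖ by positivity)]
  gcongr
  exact hL ξ

lemma memLp_mul_FT (hb : HasLinearGrowth b) (hv : ContDiffCompact 3 v) :
    MemLp (fun ξ => (b ξ : ℂ) * FT v ξ) 2 := by
  obtain ⟨L, hL⟩ := hb.exists_bound
  refine (hv.memLp_one_add_norm_pow_mul_FT.norm.const_mul |L|).mono'
    ((Complex.continuous_ofReal.comp hb.continuous).mul
      (continuous_FT hv.integrable)).aestronglyMeasurable (.of_forall fun ξ => ?_)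
  have hcube : 1 + ‖ξ‖ ≤ (1 + ‖ξ‖) ^ 3 := le_self_pow₀ (by simp) (by norm_num)
  have hbξ : |b ξ| ≤ |L| * (1 + ‖ξ‖) ^ 3 := (hL ξ).trans (by gcongr; exact le_abs_self L)
  simpa only [norm_mul, Complex.norm_real, Real.norm_eq_abs, norm_pow, mul_assoc,
    abs_of_nonneg (show 0 ≤ 1 + ‖ξ‖ by positivity)] using
    mul_le_mul_of_nonneg_right hbξ (norm_nonneg (FT v ξ))

lemma continuous_fourierMultiplier (hb : HasLinearGrowth b) (hv : ContDiffCompact 3 v) :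
    Continuous (fourierMultiplier b v) :=
  continuous_invFT (hb.integrable_mul_FT hv)

lemma eLpNorm_fourierMultiplier (hb : HasLinearGrowth b) (hv : ContDiffCompact 3 v) :
    eLpNorm (fourierMultiplier b v) 2 volume = symbolNorm b v :=
  eLpNorm_invFT (hb.integrable_mul_FT hv) (hb.memLp_mul_FT hv)

end HasLinearGrowth

lemma ContDiffCompact.mul_continuous {n : ℕ} {f : ℝ × ℝ → ℂ} (hw : ContDiffCompact n w)
    (hf : Continuous f) : ContDiffCompact 0 fun x => w x * f x :=
  ⟨contDiff_zero.2 (hw.continuous.mul hf), hw.hasCompactSupport.mul_right⟩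

lemma commutatorFT_eq_integral (hb : HasLinearGrowth b) (hw : ContDiffCompact 3 w)
    (hv : ContDiffCompact 3 v) (ξ : ℝ × ℝ) :
    commutatorFT b w v ξ = ∫ ζ, FT w (ξ - ζ) * ((b ξ - b ζ) * FT v ζ) := by
  have hFv := hv.integrable_FT (by norm_num)
  have hbFv := hb.integrable_mul_FT hv
  have hkernel {f : ℝ × ℝ → ℂ} (hf : Integrable f) : Integrable fun ζ => FT w (ξ - ζ) * f ζ :=
    hf.bdd_mul (f := fun ζ => FT w (ξ - ζ)) ((continuous_FT hw.integrable).comp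
      (continuous_sub_left ξ)).aestronglyMeasurable (.of_forall fun ζ => norm_FT_le w (ξ - ζ))
  have hinv : (fun x => w x * v x) = fun x => w x * invFT (FT v) x := by
    rw [invFT_FT hv.continuous hv.integrable hFv]
  rw [commutatorFT, hinv]
  unfold fourierMultiplier
  rw [FT_mul_invFT hw.integrable hFv, FT_mul_invFT hw.integrable hbFv, ← integral_const_mul,
    ← integral_sub ((hkernel hFv).const_mul _) (hkernel hbFv)]
  congr with ζ
  ring

lemma continuous_commutatorFT (hb : HasLinearGrowth b) (hw : ContDiffCompact 3 w)
    (hv : ContDiffCompact 3 v) : Continuous (commutatorFT b w v) :=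
  ((Complex.continuous_ofReal.comp hb.continuous).mul (continuous_FT (hw.mul hv).integrable)).sub
    (continuous_FT (hw.mul_continuous (hb.continuous_fourierMultiplier hv)).integrable)

lemma exists_eLpNorm_commutatorFT_le (hb : HasLinearGrowth b) (hm : Measurable m)
    (hbm : IncrementBound b m) (hw : ContDiffCompact 3 w) :
    ∃ K : ℝ≥0, ∀ v, ContDiffCompact 3 v →
      eLpNorm (commutatorFT b w v) 2 volume ≤ K * symbolNorm m v := by
  obtain ⟨C, s, hs, hC⟩ := hbm
  set k : ℝ × ℝ → ℂ := fun ζ => (C : ℂ) * (((1 + ‖ζ‖) ^ s : ℝ) * FT w ζ) with hk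
  have hki : Integrable k :=
    (hw.integrable_one_add_norm_rpow_mul_FT (by push_cast; linarith)).const_mul _
  have hkmeas : Measurable k := by
    have := (continuous_FT hw.integrable).measurable
    fun_prop
  refine ⟨(∫⁻ ζ, ‖k ζ‖ₑ).toNNReal, fun v hv => ?_⟩
  rw [ENNReal.coe_toNNReal hki.2.ne, eLpNorm_two_le_iff, mul_pow, symbolNorm, eLpNorm_two_sq]
  have hFv := (continuous_FT hv.integrable).measurable
  refine le_trans (lintegral_mono fun ξ => ?_)
    (lintegral_convolution_sq_le hkmeas.enorm
      (f := fun ζ => ‖(m ζ : ℂ) * FT v ζ‖ₑ) (by fun_prop))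
  gcongr
  rw [commutatorFT_eq_integral hb hw hv]
  refine (enorm_integral_le_lintegral_enorm _).trans (lintegral_mono fun ζ => ?_)
  rw [← enorm_mul, enorm_le_iff_norm_le]
  have hpos : 0 ≤ (1 + ‖ξ - ζ‖) ^ s := by positivity
  have hinc : ‖(b ξ : ℂ) - b ζ‖ ≤ |C| * (1 + ‖ξ - ζ‖) ^ s * |m ζ| := by
    rw [← Complex.ofReal_sub, Complex.norm_real, ← abs_of_nonneg hpos, ← abs_mul, ← abs_mul]
    exact (hC ξ ζ).trans (le_abs_self _)
  simp only [hk, norm_mul, Complex.norm_real, Real.norm_eq_abs, abs_of_nonneg hpos]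
  calc ‖FT w (ξ - ζ)‖ * (‖(b ξ : ℂ) - b ζ‖ * ‖FT v ζ‖)
      ≤ ‖FT w (ξ - ζ)‖ * (|C| * (1 + ‖ξ - ζ‖) ^ s * |m ζ| * ‖FT v ζ‖) := by gcongr
    _ = |C| * ((1 + ‖ξ - ζ‖) ^ s * ‖FT w (ξ - ζ)‖) * (|m ζ| * ‖FT v ζ‖) := by ring

variable {ι : Type*} [Fintype ι] {W : ι → ℝ × ℝ → ℂ} {A : ℝ≥0}

theorem exists_ellTwo_symbolNorm_mul_le (hb : HasLinearGrowth b) (hm : Measurable m)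
    (hbm : IncrementBound b m) (hW : ∀ i, ContDiffCompact 3 (W i))
    (hWA : ∀ x, ∑ i, ‖W i x‖ₑ ^ 2 ≤ (A : ℝ≥0∞) ^ 2) :
    ∃ C : ℝ≥0, ∀ u, ContDiffCompact 3 u →
      ellTwo (fun i => symbolNorm b fun x => W i x * u x) ≤
        A * symbolNorm b u + C * symbolNorm m u := by
  choose K hK using fun i => exists_eLpNorm_commutatorFT_le hb hm hbm (hW i)
  refine ⟨∑ i, K i, fun u hu => ?_⟩
  have hWu (i : ι) := (hW i).mul_continuous (hb.continuous_fourierMultiplier hu)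
  have hsplit (i : ι) : symbolNorm b (fun x => W i x * u x) ≤
      eLpNorm (fun x => W i x * fourierMultiplier b u x) 2 volume + K i * symbolNorm m u := by
    have hsum : (fun ξ => (b ξ : ℂ) * FT (fun x => W i x * u x) ξ) =
        FT (fun x => W i x * fourierMultiplier b u x) + commutatorFT b (W i) u := by
      ext ξ
      simp [commutatorFT]
    rw [symbolNorm, hsum, ← eLpNorm_FT (hWu i).integrable (hWu i).memLp]
    exact (eLpNorm_add_le (continuous_FT (hWu i).integrable).aestronglyMeasurable
      (continuous_commutatorFT hb (hW i) hu).aestronglyMeasurable one_le_two).trans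
      (add_le_add_right (hK i u hu) _)
  calc ellTwo (fun i => symbolNorm b fun x => W i x * u x)
      ≤ ellTwo (fun i => eLpNorm (fun x => W i x * fourierMultiplier b u x) 2 volume) +
          ellTwo (fun i => K i * symbolNorm m u) :=
        (ellTwo_mono hsplit).trans (ellTwo_add_le _ _)
    _ ≤ A * symbolNorm b u + ∑ i, K i * symbolNorm m u := by
        rw [← hb.eLpNorm_fourierMultiplier hu]
        exact add_le_add (ellTwo_eLpNorm_mul_le hWA fun i =>
          (hWu i).continuous.aestronglyMeasurable) (ellTwo_le_sum _)
    _ = A * symbolNorm b u + (∑ i, K i : ℝ≥0) * symbolNorm m u := by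
        rw [← Finset.sum_mul]
        push_cast
        rfl

theorem exists_symbolNorm_sum_mul_le (hb : HasLinearGrowth b) (hm : Measurable m)
    (hbm : IncrementBound b m) (hW : ∀ i, ContDiffCompact 3 (W i))
    (hWA : ∀ x, ∑ i, ‖W i x‖ₑ ^ 2 ≤ (A : ℝ≥0∞) ^ 2) :
    ∃ C : ℝ≥0, ∀ v : ι → ℝ × ℝ → ℂ, (∀ i, ContDiffCompact 3 (v i)) →
      symbolNorm b (fun x => ∑ i, W i x * v i x) ≤
        A * ellTwo (fun i => symbolNorm b (v i)) + C * ∑ i, symbolNorm m (v i) := by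
  choose K hK using fun i => exists_eLpNorm_commutatorFT_le hb hm hbm (hW i)
  refine ⟨∑ i, K i, fun v hv => ?_⟩
  have hMv (i : ι) := hb.continuous_fourierMultiplier (hv i)
  have hWv (i : ι) := (hW i).mul_continuous (hMv i)
  set P : ℝ × ℝ → ℂ := fun x => ∑ i, W i x * fourierMultiplier b (v i) x with hP
  have hPi : Integrable P := integrable_finsetSum _ fun i _ => (hWv i).integrable
  have hP2 : MemLp P 2 := memLp_finsetSum _ fun i _ => (hWv i).memLp
  have hsum : (fun ξ => (b ξ : ℂ) * FT (fun x => ∑ i, W i x * v i x) ξ) =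
      FT P + ∑ i, commutatorFT b (W i) (v i) := by
    rw [FT_sum fun i _ => ((hW i).mul (hv i)).integrable, hP,
      FT_sum fun i _ => (hWv i).integrable]
    ext ξ
    simp [commutatorFT, Finset.mul_sum]
  have hcomm (i : ι) : AEStronglyMeasurable (commutatorFT b (W i) (v i)) volume :=
    (continuous_commutatorFT hb (hW i) (hv i)).aestronglyMeasurable
  calc symbolNorm b (fun x => ∑ i, W i x * v i x)
      ≤ eLpNorm P 2 volume + eLpNorm (∑ i, commutatorFT b (W i) (v i)) 2 volume := by
        rw [symbolNorm, hsum, ← eLpNorm_FT hPi hP2]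
        exact eLpNorm_add_le (continuous_FT hPi).aestronglyMeasurable
          (Finset.aestronglyMeasurable_sum _ fun i _ => hcomm i) one_le_two
    _ ≤ A * ellTwo (fun i => symbolNorm b (v i)) + ∑ i, K i * symbolNorm m (v i) := by
        simp only [← hb.eLpNorm_fourierMultiplier (hv _)]
        exact add_le_add (eLpNorm_sum_mul_le hWA fun i => (hMv i).aestronglyMeasurable)
          ((eLpNorm_sum_le (fun i _ => hcomm i) one_le_two).trans
            (Finset.sum_le_sum fun i _ => hK i (v i) (hv i)))
    _ ≤ A * ellTwo (fun i => symbolNorm b (v i)) +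
          (∑ i, K i : ℝ≥0) * ∑ i, symbolNorm m (v i) := by
        push_cast
        rw [Finset.sum_mul]
        gcongr with i
        exact Finset.single_le_sum_of_canonicallyOrdered (f := fun i => symbolNorm m (v i))
          (Finset.mem_univ i)

end Multiplier

/-! ### Littlewood-Paley functions -/

section DyadicPartition

/-- The radial part of the `n`-th Littlewood-Paley function, as a function of `|ξ|`. -/
def dyadicBump (χ : ℝ → ℝ) : ℕ → ℝ → ℝ
  | 0, t => χ t
  | n + 1, t => χ (t / 2 ^ (n + 1)) - χ (t / 2 ^ n)

/-- The integer `k` with `2 ^ k ≤ t < 2 ^ (k + 1)`, or `0` if `t < 1`. -/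
def dyadicLevel (t : ℝ) : ℕ := Nat.log 2 ⌊t⌋₊

/-- The indices of the dyadic bumps that may be nonzero at `t`. -/
def activeLevels (t : ℝ) : Finset ℕ := {dyadicLevel t, dyadicLevel t + 1}

variable {χ : ℝ → ℝ} {t : ℝ} {n : ℕ}

lemma lt_two_pow_dyadicLevel_add_one (t : ℝ) : t < 2 ^ (dyadicLevel t + 1) := by
  exact_mod_cast Nat.lt_of_floor_lt (Nat.lt_pow_succ_log_self one_lt_two ⌊t⌋₊)

lemma two_pow_dyadicLevel_le (h : dyadicLevel t ≠ 0) : (2 : ℝ) ^ dyadicLevel t ≤ t := by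
  have hfloor : ⌊t⌋₊ ≠ 0 := fun h₀ => h (by simp [dyadicLevel, h₀])
  exact_mod_cast (Nat.le_floor_iff' (by positivity)).1 (Nat.pow_log_le_self 2 hfloor)

namespace ChiOK

lemma apply_div_two_pow_eq_one (hχ : ChiOK χ) (hn : dyadicLevel t < n) : χ (t / 2 ^ n) = 1 := by
  refine hχ.2.1 _ ((div_le_one (by positivity)).2 ?_)
  exact (lt_two_pow_dyadicLevel_add_one t).le.trans (pow_le_pow_right₀ one_le_two hn)

lemma apply_div_two_pow_eq_zero (hχ : ChiOK χ) (hn : n < dyadicLevel t) : χ (t / 2 ^ n) = 0 := by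
  refine hχ.2.2.1 _ ((le_div_iff₀ (by positivity)).2 ?_)
  rw [← pow_succ']
  exact (pow_le_pow_right₀ one_le_two hn).trans (two_pow_dyadicLevel_le (by omega))

lemma dyadicBump_eq_zero (hχ : ChiOK χ) (hn : n ∉ activeLevels t) : dyadicBump χ n t = 0 := by
  simp only [activeLevels, Finset.mem_insert, Finset.mem_singleton, not_or] at hn
  cases n with
  | zero => simpa [dyadicBump] using hχ.apply_div_two_pow_eq_zero (n := 0) (t := t) (by omega)
  | succ n =>
    rcases lt_or_gt_of_ne hn.1 with hlt | hgt
    · rw [dyadicBump, hχ.apply_div_two_pow_eq_zero hlt, hχ.apply_div_two_pow_eq_zero (by omega),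
        sub_zero]
    · rw [dyadicBump, hχ.apply_div_two_pow_eq_one hgt, hχ.apply_div_two_pow_eq_one (by omega),
        sub_self]

lemma sum_dyadicBump_activeLevels (hχ : ChiOK χ) (t : ℝ) :
    ∑ n ∈ activeLevels t, dyadicBump χ n t = 1 := by
  have htop := hχ.apply_div_two_pow_eq_one (lt_add_one (dyadicLevel t))
  rw [activeLevels, Finset.sum_pair (by omega)]
  rcases hk : dyadicLevel t with _ | k <;> rw [hk] at htop <;> simp only [dyadicBump, htop]
  · simp
  · rw [hχ.apply_div_two_pow_eq_zero (n := k) (by omega)]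
    ring

end ChiOK

end DyadicPartition

section EuclideanMagnitude

lemma norm_le_en (v : ℝ × ℝ) : ‖v‖ ≤ en v :=
  max_le (Real.abs_le_sqrt (by nlinarith)) (Real.abs_le_sqrt (by nlinarith))

lemma en_le_two_mul_norm (v : ℝ × ℝ) : en v ≤ 2 * ‖v‖ := by
  refine Real.sqrt_le_iff.2 ⟨by positivity, ?_⟩
  have h₁ := pow_le_pow_left₀ (norm_nonneg _) (norm_fst_le v) 2
  have h₂ := pow_le_pow_left₀ (norm_nonneg _) (norm_snd_le v) 2
  rw [Real.norm_eq_abs, sq_abs] at h₁ h₂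
  linarith [sq_nonneg ‖v‖]

lemma en_smul {c : ℝ} (hc : 0 ≤ c) (v : ℝ × ℝ) : en (c • v) = c * en v := by
  simp only [en, Prod.smul_fst, Prod.smul_snd, smul_eq_mul, mul_pow, ← mul_add]
  rw [Real.sqrt_mul (sq_nonneg c), Real.sqrt_sq hc]

lemma continuous_en : Continuous en := by unfold en; fun_prop

lemma contDiffAt_en {v : ℝ × ℝ} (hv : v ≠ 0) {n : WithTop ℕ∞} : ContDiffAt ℝ n en v := by
  refine ContDiffAt.sqrt (by fun_prop) fun h => hv ?_
  have hsq : v.1 ^ 2 = 0 ∧ v.2 ^ 2 = 0 :=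
    (add_eq_zero_iff_of_nonneg (sq_nonneg _) (sq_nonneg _)).1 h
  exact Prod.ext (pow_eq_zero_iff two_ne_zero |>.1 hsq.1) (pow_eq_zero_iff two_ne_zero |>.1 hsq.2)

variable {n : ℕ} {ξ : ℝ × ℝ}

lemma one_add_norm_le_of_mem_activeLevels (hn : n ∈ activeLevels (en ξ)) :
    1 + ‖ξ‖ ≤ 4 * 2 ^ n := by
  have hk : dyadicLevel (en ξ) ≤ n := by
    simp only [activeLevels, Finset.mem_insert, Finset.mem_singleton] at hn
    omega
  have hpow : (2 : ℝ) ^ dyadicLevel (en ξ) ≤ 2 ^ n := pow_le_pow_right₀ one_le_two hk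
  have hlt := lt_two_pow_dyadicLevel_add_one (en ξ)
  rw [pow_succ] at hlt
  linarith [norm_le_en ξ, one_le_pow₀ (n := n) one_le_two (M₀ := ℝ)]

lemma two_pow_le_of_mem_activeLevels (hn : n ∈ activeLevels (en ξ)) :
    (2 : ℝ) ^ n ≤ 4 * (1 + ‖ξ‖) := by
  have hk : n ≤ dyadicLevel (en ξ) + 1 := by
    simp only [activeLevels, Finset.mem_insert, Finset.mem_singleton] at hn
    omega
  have hpow : (2 : ℝ) ^ n ≤ 2 ^ (dyadicLevel (en ξ) + 1) := pow_le_pow_right₀ one_le_two hk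
  rw [pow_succ] at hpow
  rcases eq_or_ne (dyadicLevel (en ξ)) 0 with h₀ | h₀
  · rw [h₀] at hpow
    linarith [norm_nonneg ξ]
  · linarith [two_pow_dyadicLevel_le h₀, en_le_two_mul_norm ξ]

end EuclideanMagnitude

namespace Polarization

/-- The angular cut-off `φ₊` (for `σ = true`) or `φ₋` (for `σ = false`). -/
def angular (Θ : Polarization) (σ : Bool) : ℝ × ℝ → ℝ := if σ then Θ.phip else Θ.phim

variable (Θ : Polarization) (σ : Bool)

lemma angular_smul {c : ℝ} (hc : 0 < c) (v : ℝ × ℝ) : Θ.angular σ (c • v) = Θ.angular σ v := by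
  cases σ <;> simp [angular, Θ.phim_def, Θ.homog_p c hc v]

lemma angular_mem_Icc (v : ℝ × ℝ) : Θ.angular σ v ∈ Set.Icc (0 : ℝ) 1 := by
  have := Θ.mem_Icc_p v
  cases σ <;> simpa [angular, Θ.phim_def, and_comm] using this

lemma contDiffOn_angular : ContDiffOn ℝ (⊤ : ℕ∞) (Θ.angular σ) {v | v ≠ 0} := by
  cases σ
  exacts [Θ.smooth_m, Θ.smooth_p]

lemma angular_false (v : ℝ × ℝ) : Θ.angular false v = 1 - Θ.angular true v := by
  simp [angular, Θ.phim_def]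

end Polarization

section LittlewoodPaley

variable {χ : ℝ → ℝ} {Θ : Polarization} {n : ℕ} {σ : Bool} {ξ : ℝ × ℝ}

lemma psiLP_zero : psiLP χ Θ 0 σ ξ = dyadicBump χ 0 (en ξ) / 2 := rfl

lemma psiLP_succ :
    psiLP χ Θ (n + 1) σ ξ = Θ.angular σ ξ * dyadicBump χ (n + 1) (en ξ) := by
  have hinv (k : ℕ) (t : ℝ) : (2 : ℝ) ^ (-(k : ℤ)) * t = t / 2 ^ k := by
    rw [zpow_neg, zpow_natCast, inv_mul_eq_div]
  have hexp : -((n + 1 : ℕ) : ℤ) + 1 = -(n : ℤ) := by push_cast; ring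
  rw [psiLP, if_neg n.succ_ne_zero, hexp, hinv, hinv, dyadicBump]
  cases σ <;> rfl

lemma psiLP_eq_zero (hχ : ChiOK χ) (hn : n ∉ activeLevels (en ξ)) : psiLP χ Θ n σ ξ = 0 := by
  cases n with
  | zero => rw [psiLP_zero, hχ.dyadicBump_eq_zero hn, zero_div]
  | succ n => rw [psiLP_succ, hχ.dyadicBump_eq_zero hn, mul_zero]

lemma psiLP_succ_eq_psiLP_one_smul (ξ : ℝ × ℝ) :
    psiLP χ Θ (n + 1) σ ξ = psiLP χ Θ 1 σ (((2 : ℝ) ^ n)⁻¹ • ξ) := by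
  have hpos : 0 < ((2 : ℝ) ^ n)⁻¹ := by positivity
  have hdiv (k : ℕ) : ((2 : ℝ) ^ n)⁻¹ * en ξ / 2 ^ k = en ξ / 2 ^ (n + k) := by
    rw [pow_add]
    field_simp
  rw [psiLP_succ, psiLP_succ, Θ.angular_smul σ hpos, en_smul hpos.le, dyadicBump, dyadicBump,
    hdiv, hdiv, zero_add, add_zero]

lemma contDiffAt_psiLP (hχ : ChiOK χ) (hξ : ξ ≠ 0) : ContDiffAt ℝ (⊤ : ℕ∞) (psiLP χ Θ n σ) ξ := by
  have hbump (c : ℝ) : ContDiffAt ℝ (⊤ : ℕ∞) (fun ξ => χ (en ξ / c)) ξ :=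
    hχ.1.contDiffAt.comp ξ ((contDiffAt_en hξ).div_const c)
  cases n with
  | zero =>
    exact ((hbump 1).div_const 2).congr_of_eventuallyEq (.of_forall fun _ => by simp [psiLP])
  | succ n =>
    have hang := (Θ.contDiffOn_angular σ).contDiffAt (isOpen_ne.mem_nhds hξ)
    exact (hang.mul ((hbump _).sub (hbump _))).congr_of_eventuallyEq
      (.of_forall fun _ => psiLP_succ)

lemma psiLP_eventuallyEq_const (hχ : ChiOK χ) (Θ : Polarization) (n : ℕ) (σ : Bool) :
    psiLP χ Θ n σ =ᶠ[𝓝 0] fun _ => if n = 0 then 1 / 2 else 0 := by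
  have hsmall : ∀ᶠ ξ in 𝓝 (0 : ℝ × ℝ), en ξ < 1 :=
    continuous_en.continuousAt.eventually_lt_const (by simp [en])
  filter_upwards [hsmall] with ξ hξ
  have hone (k : ℕ) : χ (en ξ / 2 ^ k) = 1 :=
    hχ.2.1 _ ((div_le_one (by positivity)).2 (hξ.le.trans (one_le_pow₀ one_le_two)))
  cases n with
  | zero => simp [psiLP, hχ.2.1 _ hξ.le]
  | succ n => simp [psiLP_succ, dyadicBump, hone]

lemma contDiff_psiLP (hχ : ChiOK χ) (Θ : Polarization) (n : ℕ) (σ : Bool) :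
    ContDiff ℝ (⊤ : ℕ∞) (psiLP χ Θ n σ) := by
  rw [contDiff_iff_contDiffAt]
  intro ξ
  rcases eq_or_ne ξ 0 with rfl | hξ
  · exact contDiffAt_const.congr_of_eventuallyEq (psiLP_eventuallyEq_const hχ Θ n σ)
  · exact contDiffAt_psiLP hχ hξ

lemma hasCompactSupport_psiLP (hχ : ChiOK χ) (Θ : Polarization) (n : ℕ) (σ : Bool) :
    HasCompactSupport (psiLP χ Θ n σ) := by
  refine .of_support_subset_isCompact (isCompact_closedBall 0 (4 * 2 ^ n)) fun ξ hξ => ?_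
  have hn : n ∈ activeLevels (en ξ) := by_contra fun hn => hξ (psiLP_eq_zero hχ hn)
  rw [mem_closedBall_zero_iff]
  linarith [one_add_norm_le_of_mem_activeLevels hn]

lemma exists_lipschitzWith_psiLP (hχ : ChiOK χ) (Θ : Polarization) :
    ∃ L : ℝ≥0, ∀ n σ, LipschitzWith (L / 2 ^ n) (psiLP χ Θ n σ) := by
  have hlip (n : ℕ) (σ : Bool) : ∃ L : ℝ≥0, LipschitzWith L (psiLP χ Θ n σ) :=
    (contDiff_psiLP hχ Θ n σ).lipschitzWith_of_hasCompactSupport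
      (hasCompactSupport_psiLP hχ Θ n σ) (by simp)
  choose L hL using hlip
  have hle (σ : Bool) (a : Bool → ℝ≥0) : a σ ≤ ∑ τ, a τ :=
    Finset.single_le_sum_of_canonicallyOrdered (Finset.mem_univ σ)
  refine ⟨∑ σ, (L 0 σ + 2 * L 1 σ), fun n σ => ?_⟩
  cases n with
  | zero =>
    refine (hL 0 σ).weaken ?_
    simpa using le_self_add.trans (hle σ fun σ => L 0 σ + 2 * L 1 σ)
  | succ n =>
    have hscale : LipschitzWith (L 1 σ * ‖((2 : ℝ) ^ n)⁻¹‖₊) (psiLP χ Θ (n + 1) σ) := by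
      rw [funext psiLP_succ_eq_psiLP_one_smul]
      exact (hL 1 σ).comp (lipschitzWith_smul _)
    refine hscale.weaken ?_
    rw [nnnorm_inv, nnnorm_pow, Real.nnnorm_ofNat, le_div_iff₀ (by positivity)]
    calc L 1 σ * (2 ^ n)⁻¹ * 2 ^ (n + 1) = 2 * L 1 σ := by field_simp; ring
      _ ≤ ∑ σ, (L 0 σ + 2 * L 1 σ) :=
        le_add_self.trans (hle σ fun σ => L 0 σ + 2 * L 1 σ)

end LittlewoodPaley

/-! ### The symbol of the anisotropic norms -/

/-- The function `2 ^ (p n) ψ_{Θ,n,+}` (for `i = (n, true)`) or `2 ^ (q n) ψ_{Θ,n,-}` (for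
`i = (n, false)`), one of the building blocks of `‖·‖_{Θ,p,q}`. -/
def anisoCoeff (χ : ℝ → ℝ) (Θ : Polarization) (p q : ℝ) (i : ℕ × Bool) (ξ : ℝ × ℝ) : ℝ :=
  2 ^ ((if i.2 then p else q) * i.1) * psiLP χ Θ i.1 i.2 ξ

/-- The symbol whose Fourier multiplier has `L²` norm `‖·‖_{Θ,p,q}`. The sum is taken in `ℝ≥0∞`,
but only finitely many of its terms are nonzero. -/
def anisoSymbol (χ : ℝ → ℝ) (Θ : Polarization) (p q : ℝ) (ξ : ℝ × ℝ) : ℝ :=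
  √(∑' i, ‖anisoCoeff χ Θ p q i ξ‖ₑ ^ 2).toReal

section AnisoSymbol

variable {χ : ℝ → ℝ} {Θ : Polarization} {p q : ℝ} {ξ ζ : ℝ × ℝ}

lemma measurable_anisoCoeff (hχ : ChiOK χ) (Θ : Polarization) (p q : ℝ) (i : ℕ × Bool) :
    Measurable (anisoCoeff χ Θ p q i) :=
  (contDiff_psiLP hχ Θ i.1 i.2).continuous.measurable.const_mul _

lemma measurable_anisoSymbol (hχ : ChiOK χ) (Θ : Polarization) (p q : ℝ) :
    Measurable (anisoSymbol χ Θ p q) :=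
  (Measurable.tsum fun i =>
    (measurable_anisoCoeff hχ Θ p q i).enorm.pow_const 2).ennreal_toReal.sqrt

lemma anisoSymbol_nonneg : 0 ≤ anisoSymbol χ Θ p q ξ := Real.sqrt_nonneg _

lemma tsum_enorm_anisoCoeff_sq (hχ : ChiOK χ) {S : Finset ℕ} (hS : activeLevels (en ξ) ⊆ S) :
    ∑' i, ‖anisoCoeff χ Θ p q i ξ‖ₑ ^ 2 =
      ENNReal.ofReal (∑ i ∈ S ×ˢ Finset.univ, anisoCoeff χ Θ p q i ξ ^ 2) := by
  rw [tsum_eq_sum (s := S ×ˢ Finset.univ), ENNReal.ofReal_sum_of_nonneg fun i _ => sq_nonneg _]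
  · simp only [← sq_abs (anisoCoeff _ _ _ _ _ _), ENNReal.ofReal_pow (abs_nonneg _),
      Real.enorm_eq_ofReal_abs]
  · intro i hi
    have hi₁ : i.1 ∉ activeLevels (en ξ) := fun h => hi (by simpa using hS h)
    simp [anisoCoeff, psiLP_eq_zero hχ hi₁]

lemma anisoSymbol_eq_sqrt_sum (hχ : ChiOK χ) {S : Finset ℕ} (hS : activeLevels (en ξ) ⊆ S) :
    anisoSymbol χ Θ p q ξ = √(∑ i ∈ S ×ˢ Finset.univ, anisoCoeff χ Θ p q i ξ ^ 2) := by
  rw [anisoSymbol, tsum_enorm_anisoCoeff_sq hχ hS,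
    ENNReal.toReal_ofReal (Finset.sum_nonneg fun _ _ => sq_nonneg _)]

lemma anisoSymbol_sq (hχ : ChiOK χ) (ξ : ℝ × ℝ) :
    anisoSymbol χ Θ p q ξ ^ 2 =
      ∑ n ∈ activeLevels (en ξ), ∑ σ, anisoCoeff χ Θ p q (n, σ) ξ ^ 2 := by
  rw [anisoSymbol_eq_sqrt_sum hχ subset_rfl, Finset.sum_product,
    Real.sq_sqrt (Finset.sum_nonneg fun _ _ => Finset.sum_nonneg fun _ _ => sq_nonneg _)]

lemma enorm_anisoSymbol_sq (hχ : ChiOK χ) (ξ : ℝ × ℝ) :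
    ‖anisoSymbol χ Θ p q ξ‖ₑ ^ 2 = ∑' i, ‖anisoCoeff χ Θ p q i ξ‖ₑ ^ 2 := by
  have hfin : ∑' i, ‖anisoCoeff χ Θ p q i ξ‖ₑ ^ 2 ≠ ⊤ := by
    rw [tsum_enorm_anisoCoeff_sq hχ subset_rfl]
    exact ENNReal.ofReal_ne_top
  rw [Real.enorm_eq_ofReal anisoSymbol_nonneg, ← ENNReal.ofReal_pow anisoSymbol_nonneg,
    anisoSymbol, Real.sq_sqrt ENNReal.toReal_nonneg, ENNReal.ofReal_toReal hfin]

lemma enorm_ofReal_complex (r : ℝ) : ‖(r : ℂ)‖ₑ = ‖r‖ₑ := by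
  rw [enorm_eq_nnnorm, enorm_eq_nnnorm, Complex.nnnorm_real]

lemma two_rpow_mul_natCast_sq (s : ℝ) (n : ℕ) : ((2 : ℝ) ^ (s * n)) ^ 2 = 2 ^ (2 * s * n) := by
  rw [← Real.rpow_mul_natCast zero_le_two]
  push_cast
  ring_nf

lemma segNorm_sq (χ : ℝ → ℝ) (Θ : Polarization) (p q : ℝ) (σ : Bool) (u : ℝ × ℝ → ℂ) :
    segNorm χ Θ (if σ then p else q) σ u ^ 2 =
      ∑' n : ℕ, ∫⁻ ξ, ‖anisoCoeff χ Θ p q (n, σ) ξ‖ₑ ^ 2 * ‖FT u ξ‖ₑ ^ 2 := by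
  have hterm (n : ℕ) (ξ : ℝ × ℝ) : ‖anisoCoeff χ Θ p q (n, σ) ξ‖ₑ ^ 2 * ‖FT u ξ‖ₑ ^ 2 =
      ENNReal.ofReal (2 ^ (2 * (if σ then p else q) * n)) *
        ‖(psiLP χ Θ n σ ξ : ℂ) * FT u ξ‖ₑ ^ 2 := by
    rw [anisoCoeff, enorm_mul, enorm_mul, mul_pow, mul_pow, mul_assoc, enorm_ofReal_complex,
      Real.enorm_eq_ofReal (by positivity), ← ENNReal.ofReal_pow (by positivity),
      two_rpow_mul_natCast_sq]
  rw [segNorm, ← ENNReal.rpow_natCast, ← ENNReal.rpow_mul]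
  simp only [hterm, lintegral_const_mul' _ _ ENNReal.ofReal_ne_top, eLpNorm_two_sq]
  norm_num

lemma anorm_eq_symbolNorm (hχ : ChiOK χ) (Θ : Polarization) (p q : ℝ) {u : ℝ × ℝ → ℂ}
    (hu : Integrable u) : anorm χ Θ p q u = symbolNorm (anisoSymbol χ Θ p q) u := by
  have hFT := (continuous_FT hu).measurable
  have hcoeff := measurable_anisoCoeff hχ Θ p q
  have hanorm : anorm χ Θ p q u ^ 2 =
      segNorm χ Θ (if true then p else q) true u ^ 2 +
        segNorm χ Θ (if false then p else q) false u ^ 2 := by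
    rw [anorm, ← ENNReal.rpow_natCast, ← ENNReal.rpow_mul]
    norm_num
  refine (ENNReal.pow_right_strictMono two_ne_zero).injective ?_
  rw [hanorm, segNorm_sq, segNorm_sq, symbolNorm, eLpNorm_two_sq]
  simp only [enorm_mul, mul_pow, enorm_ofReal_complex, enorm_anisoSymbol_sq hχ,
    ← ENNReal.tsum_mul_right]
  rw [lintegral_tsum fun i => by fun_prop, ENNReal.tsum_prod', ← ENNReal.tsum_add]
  simp only [tsum_bool, add_comm]

lemma abs_sqrt_sum_sq_sub_sqrt_sum_sq_le {ι : Type*} (s : Finset ι) (a b : ι → ℝ) :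
    |√(∑ i ∈ s, a i ^ 2) - √(∑ i ∈ s, b i ^ 2)| ≤ ∑ i ∈ s, |a i - b i| := by
  have hnorm (c : ι → ℝ) :
      ‖(WithLp.toLp 2 fun i : s => c i : EuclideanSpace ℝ s)‖ = √(∑ i ∈ s, c i ^ 2) := by
    rw [EuclideanSpace.norm_eq, ← Finset.sum_coe_sort s]
    simp
  have hsub : √(∑ i ∈ s, (a i - b i) ^ 2) ≤ ∑ i ∈ s, |a i - b i| := by
    refine Real.sqrt_le_iff.2 ⟨Finset.sum_nonneg fun _ _ => abs_nonneg _, ?_⟩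
    simpa only [sq_abs] using
      Finset.sum_sq_le_sq_sum_of_nonneg (s := s) fun i _ => abs_nonneg (a i - b i)
  rw [← hnorm, ← hnorm]
  exact (abs_norm_sub_norm_le _ _).trans ((hnorm (a - b)).trans_le hsub)

lemma abs_anisoSymbol_sub_le (hχ : ChiOK χ) {M : ℝ}
    (hM : ∀ n ∈ activeLevels (en ξ) ∪ activeLevels (en ζ), ∀ σ,
      |anisoCoeff χ Θ p q (n, σ) ξ - anisoCoeff χ Θ p q (n, σ) ζ| ≤ M) :
    |anisoSymbol χ Θ p q ξ - anisoSymbol χ Θ p q ζ| ≤ 8 * M := by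
  set S := activeLevels (en ξ) ∪ activeLevels (en ζ)
  have hcard : S.card ≤ 4 :=
    (Finset.card_union_le _ _).trans (add_le_add Finset.card_le_two Finset.card_le_two)
  have hM₀ : 0 ≤ M :=
    (abs_nonneg _).trans <|
      hM (dyadicLevel (en ξ)) (Finset.mem_union_left _ (Finset.mem_insert_self _ _)) true
  rw [anisoSymbol_eq_sqrt_sum hχ Finset.subset_union_left,
    anisoSymbol_eq_sqrt_sum hχ Finset.subset_union_right]
  calc |√(∑ i ∈ S ×ˢ Finset.univ, anisoCoeff χ Θ p q i ξ ^ 2) -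
          √(∑ i ∈ S ×ˢ Finset.univ, anisoCoeff χ Θ p q i ζ ^ 2)|
      ≤ ∑ i ∈ S ×ˢ Finset.univ, |anisoCoeff χ Θ p q i ξ - anisoCoeff χ Θ p q i ζ| :=
        abs_sqrt_sum_sq_sub_sqrt_sum_sq_le _ _ _
    _ ≤ (S ×ˢ (Finset.univ : Finset Bool)).card • M :=
        Finset.sum_le_card_nsmul _ _ _ fun i hi => hM i.1 (Finset.mem_product.1 hi).1 i.2
    _ ≤ 8 * M := by
        rw [nsmul_eq_mul, Finset.card_product, Finset.card_univ, Fintype.card_bool]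
        gcongr
        exact_mod_cast Nat.mul_le_mul_right 2 hcard

lemma exists_lipschitzWith_anisoSymbol (hχ : ChiOK χ) (Θ : Polarization) (hp : p ≤ 1)
    (hq : q ≤ 1) : ∃ L : ℝ≥0, LipschitzWith L (anisoSymbol χ Θ p q) := by
  obtain ⟨L, hL⟩ := exists_lipschitzWith_psiLP hχ Θ
  refine ⟨8 * L, .of_dist_le_mul fun ξ ζ => ?_⟩
  rw [Real.dist_eq, NNReal.coe_mul, NNReal.coe_ofNat, mul_assoc]
  refine abs_anisoSymbol_sub_le hχ fun n _ σ => ?_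
  have hweight : (2 : ℝ) ^ ((if σ then p else q) * n) ≤ 2 ^ n := by
    rw [← Real.rpow_natCast]
    refine Real.rpow_le_rpow_of_exponent_le one_le_two (mul_le_of_le_one_left n.cast_nonneg ?_)
    split_ifs <;> assumption
  have hψ := (hL n σ).dist_le_mul ξ ζ
  rw [Real.dist_eq] at hψ
  calc |anisoCoeff χ Θ p q (n, σ) ξ - anisoCoeff χ Θ p q (n, σ) ζ|
      = 2 ^ ((if σ then p else q) * n) * |psiLP χ Θ n σ ξ - psiLP χ Θ n σ ζ| := by
        rw [anisoCoeff, anisoCoeff, ← mul_sub, abs_mul, abs_of_nonneg (by positivity)]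
    _ ≤ 2 ^ n * ((L / 2 ^ n : ℝ≥0) * dist ξ ζ) := by gcongr
    _ = L * dist ξ ζ := by push_cast; field_simp

lemma HasLinearGrowth.of_lipschitzWith {b : ℝ × ℝ → ℝ} {L : ℝ≥0} (hb : LipschitzWith L b) :
    HasLinearGrowth b := by
  refine ⟨hb.continuous, |b 0| + L, fun ξ => ?_⟩
  have hξ := hb.dist_le_mul ξ 0
  rw [dist_zero_right, Real.dist_eq] at hξ
  have habs := abs_sub_abs_le_abs_sub (b ξ) (b 0)
  nlinarith [norm_nonneg ξ, abs_nonneg (b 0), L.coe_nonneg,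
    mul_nonneg (abs_nonneg (b 0)) (norm_nonneg ξ)]

lemma exists_abs_anisoSymbol_sub_le_div (hχ : ChiOK χ) (Θ : Polarization) (p : ℝ) :
    ∃ L : ℝ≥0, ∀ ξ ζ, Θ.angular true ξ = 0 → Θ.angular true ζ = 0 → ‖ξ - ζ‖ ≤ ‖ζ‖ / 2 →
      |anisoSymbol χ Θ p 0 ξ - anisoSymbol χ Θ p 0 ζ| ≤ L * (‖ξ - ζ‖ / (1 + ‖ζ‖)) := by
  obtain ⟨L, hL⟩ := exists_lipschitzWith_psiLP hχ Θ
  refine ⟨8 * (8 * L), fun ξ ζ hξ hζ hnear => ?_⟩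
  rw [NNReal.coe_mul, NNReal.coe_ofNat, mul_assoc]
  refine abs_anisoSymbol_sub_le hχ fun n hn σ => ?_
  have hfreq : 1 + ‖ζ‖ ≤ 8 * 2 ^ n := by
    rcases Finset.mem_union.1 hn with hn | hn <;>
      linarith [one_add_norm_le_of_mem_activeLevels hn, norm_le_norm_add_norm_sub' ζ ξ,
        norm_sub_rev ξ ζ, norm_nonneg ζ]
  have hcoeff : |anisoCoeff χ Θ p 0 (n, σ) ξ - anisoCoeff χ Θ p 0 (n, σ) ζ| ≤
      |psiLP χ Θ n σ ξ - psiLP χ Θ n σ ζ| := by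
    cases σ
    · simp [anisoCoeff]
    · cases n <;> simp [anisoCoeff, psiLP_succ, hξ, hζ]
  have hψ := (hL n σ).dist_le_mul ξ ζ
  rw [Real.dist_eq, dist_eq_norm] at hψ
  push_cast at hψ ⊢
  calc _ ≤ L / 2 ^ n * ‖ξ - ζ‖ := hcoeff.trans hψ
    _ = L * ‖ξ - ζ‖ * (1 / 2 ^ n) := by ring
    _ ≤ L * ‖ξ - ζ‖ * (8 / (1 + ‖ζ‖)) := by
        gcongr _ * ?_
        rw [div_le_div_iff₀ (by positivity) (by positivity)]
        linarith
    _ = 8 * L * (‖ξ - ζ‖ / (1 + ‖ζ‖)) := by ring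

end AnisoSymbol

/-! ### Comparison of the symbols of two polarizations -/

section Nondegeneracy

variable {χ : ℝ → ℝ} {Θ : Polarization} {p q : ℝ} {ξ : ℝ × ℝ}

lemma ChiOK.half_le_sum_dyadicBump_sq (hχ : ChiOK χ) (t : ℝ) :
    1 / 2 ≤ ∑ n ∈ activeLevels t, dyadicBump χ n t ^ 2 := by
  have hcs := sq_sum_le_card_mul_sum_sq (s := activeLevels t) (f := fun n => dyadicBump χ n t)
  have hcard : ((activeLevels t).card : ℝ) ≤ 2 := by exact_mod_cast Finset.card_le_two
  rw [hχ.sum_dyadicBump_activeLevels] at hcs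
  nlinarith [Finset.sum_nonneg fun n (_ : n ∈ activeLevels t) => sq_nonneg (dyadicBump χ n t)]

lemma dyadicBump_sq_div_two_le (n : ℕ) (ξ : ℝ × ℝ) :
    dyadicBump χ n (en ξ) ^ 2 / 2 ≤ ∑ σ, psiLP χ Θ n σ ξ ^ 2 := by
  rw [Fintype.sum_bool]
  cases n with
  | zero => exact le_of_eq (by rw [psiLP_zero, psiLP_zero]; ring)
  | succ n =>
    rw [psiLP_succ, psiLP_succ, Θ.angular_false]
    nlinarith [mul_nonneg (sq_nonneg (2 * Θ.angular true ξ - 1))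
      (sq_nonneg (dyadicBump χ (n + 1) (en ξ)))]

lemma half_le_anisoSymbol (hχ : ChiOK χ) {c : ℝ} (hc : 0 ≤ c)
    (hcoeff : ∀ n ∈ activeLevels (en ξ),
      c ^ 2 * (dyadicBump χ n (en ξ) ^ 2 / 2) ≤ ∑ σ, anisoCoeff χ Θ p q (n, σ) ξ ^ 2) :
    c / 2 ≤ anisoSymbol χ Θ p q ξ := by
  refine (pow_le_pow_iff_left₀ (by positivity) anisoSymbol_nonneg two_ne_zero).1 ?_
  rw [anisoSymbol_sq hχ]
  refine le_trans ?_ (Finset.sum_le_sum hcoeff)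
  rw [← Finset.mul_sum, ← Finset.sum_div]
  nlinarith [mul_le_mul_of_nonneg_left (hχ.half_le_sum_dyadicBump_sq (en ξ)) (sq_nonneg c)]

lemma rpow_one_add_norm_div_eight_le_anisoSymbol (hχ : ChiOK χ) (hq₁ : -1 ≤ q) (hq₀ : q ≤ 0)
    (hqp : q ≤ p) : (1 + ‖ξ‖) ^ q / 8 ≤ anisoSymbol χ Θ p q ξ := by
  have hquarter : (1 / 4 : ℝ) ≤ 4 ^ q := by
    simpa [Real.rpow_neg_one] using Real.rpow_le_rpow_of_exponent_le (x := 4) (by norm_num) hq₁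
  have hweight (n : ℕ) (hn : n ∈ activeLevels (en ξ)) (σ : Bool) :
      (1 + ‖ξ‖) ^ q / 4 ≤ 2 ^ ((if σ then p else q) * n) := by
    calc (1 + ‖ξ‖) ^ q / 4 = 1 / 4 * (1 + ‖ξ‖) ^ q := by ring
      _ ≤ 4 ^ q * (1 + ‖ξ‖) ^ q := by gcongr
      _ = (4 * (1 + ‖ξ‖)) ^ q := (Real.mul_rpow (by norm_num) (by positivity)).symm
      _ ≤ (2 ^ n) ^ q :=
        Real.rpow_le_rpow_of_nonpos (by positivity) (two_pow_le_of_mem_activeLevels hn) hq₀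
      _ = 2 ^ (q * n) := by rw [← Real.rpow_natCast, ← Real.rpow_mul zero_le_two, mul_comm]
      _ ≤ 2 ^ ((if σ then p else q) * n) := by
        gcongr
        · exact one_le_two
        · split_ifs <;> simp [hqp]
  calc (1 + ‖ξ‖) ^ q / 8 = (1 + ‖ξ‖) ^ q / 4 / 2 := by ring
    _ ≤ anisoSymbol χ Θ p q ξ := half_le_anisoSymbol hχ (by positivity) fun n hn => by
        refine (mul_le_mul_of_nonneg_left (dyadicBump_sq_div_two_le (Θ := Θ) n ξ)
          (sq_nonneg _)).trans ?_
        rw [Finset.mul_sum]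
        gcongr with σ
        rw [anisoCoeff, mul_pow]
        gcongr
        exact hweight n hn σ

lemma Polarization.angular_true_eq_one (hξ : ξ ∈ Θ.Cp) (hξ₀ : ξ ≠ 0) : Θ.angular true ξ = 1 :=
  Θ.one_on_p ξ hξ hξ₀

lemma dyadicBump_succ_en_zero (n : ℕ) : dyadicBump χ (n + 1) (en 0) = 0 := by
  simp [dyadicBump, en]

lemma sum_anisoCoeff_succ_sq (n : ℕ) (ξ : ℝ × ℝ) :
    ∑ σ, anisoCoeff χ Θ p q (n + 1, σ) ξ ^ 2 =
      ((2 ^ (p * (n + 1 : ℕ)) * Θ.angular true ξ) ^ 2 +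
        (2 ^ (q * (n + 1 : ℕ)) * (1 - Θ.angular true ξ)) ^ 2) *
          dyadicBump χ (n + 1) (en ξ) ^ 2 := by
  rw [Fintype.sum_bool, anisoCoeff, anisoCoeff, psiLP_succ, psiLP_succ, Θ.angular_false]
  simp only [if_true, Bool.false_eq_true, if_false]
  ring

lemma half_le_anisoSymbol_of_mem_Cp (hχ : ChiOK χ) (hp : 0 ≤ p) (hξ : ξ ∈ Θ.Cp) :
    1 / 2 ≤ anisoSymbol χ Θ p q ξ := by
  refine half_le_anisoSymbol hχ zero_le_one fun n _ => ?_
  rw [one_pow, one_mul]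
  rcases n with _ | n
  · simpa [anisoCoeff] using dyadicBump_sq_div_two_le (Θ := Θ) 0 ξ
  · rcases eq_or_ne ξ 0 with rfl | hξ₀
    · rw [sum_anisoCoeff_succ_sq, dyadicBump_succ_en_zero]
      simp
    · have hweight : 1 ≤ ((2 : ℝ) ^ (p * (n + 1 : ℕ))) ^ 2 :=
        one_le_pow₀ (Real.one_le_rpow one_le_two (by positivity))
      rw [sum_anisoCoeff_succ_sq, Θ.angular_true_eq_one hξ hξ₀]
      nlinarith [mul_le_mul_of_nonneg_right hweight (sq_nonneg (dyadicBump χ (n + 1) (en ξ)))]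

end Nondegeneracy

section Cones

variable {Θ Θ' : Polarization} {ζ : ℝ × ℝ}

lemma Polarization.zero_mem_Cp (Θ : Polarization) : (0 : ℝ × ℝ) ∈ Θ.Cp :=
  (Θ.inter_eq.ge rfl).1

lemma Polarization.ne_zero_of_notMem_Cp (hζ : ζ ∉ Θ.Cp) : ζ ≠ 0 :=
  fun h => hζ (h ▸ Θ.zero_mem_Cp)

lemma PolLt.angular_true_eq_zero (h : PolLt Θ' Θ) (hζ : ζ ∉ Θ.Cp) : Θ'.angular true ζ = 0 := by
  have hζ₀ := Θ.ne_zero_of_notMem_Cp hζ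
  exact Θ'.zero_on_m ζ (interior_subset (h ⟨subset_closure ⟨trivial, hζ⟩, hζ₀⟩)) hζ₀

lemma PolLt.exists_angular_true_eq_zero_of_norm_sub_lt (h : PolLt Θ' Θ) :
    ∃ c > 0, c ≤ 1 / 2 ∧
      ∀ ζ ∉ Θ.Cp, ∀ ξ, ‖ξ - ζ‖ < c * ‖ζ‖ → Θ'.angular true ξ = 0 := by
  set K := closure (Set.univ \ Θ.Cp) ∩ Metric.sphere 0 1
  have hK : IsCompact K := (isCompact_sphere 0 1).inter_left isClosed_closure
  have hKC : K ⊆ interior Θ'.Cm := fun v hv => h ⟨hv.1, ne_zero_of_mem_unit_sphere ⟨v, hv.2⟩⟩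
  obtain ⟨c, hc, hcK⟩ := hK.exists_thickening_subset_open isOpen_interior hKC
  refine ⟨min c (1 / 2), by positivity, min_le_right _ _, fun ζ hζ ξ hξ => ?_⟩
  have hζ₀ : 0 < ‖ζ‖ := norm_pos_iff.2 (Θ.ne_zero_of_notMem_Cp hζ)
  have hrescale (v : ℝ × ℝ) : ‖ζ‖ • ‖ζ‖⁻¹ • v = v := smul_inv_smul₀ hζ₀.ne' v
  have hζK : ‖ζ‖⁻¹ • ζ ∈ K := by
    refine ⟨subset_closure ⟨trivial, fun hmem => hζ ?_⟩, ?_⟩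
    · simpa only [hrescale] using Θ.cone_p ‖ζ‖ _ hmem
    · rw [mem_sphere_zero_iff_norm, norm_smul, norm_inv, norm_norm, inv_mul_cancel₀ hζ₀.ne']
  have hξC : ‖ζ‖⁻¹ • ξ ∈ Θ'.Cm := by
    refine interior_subset (hcK (Metric.mem_thickening_iff.2 ⟨_, hζK, ?_⟩))
    rw [dist_eq_norm, ← smul_sub, norm_smul, norm_inv, norm_norm, inv_mul_lt_iff₀ hζ₀, mul_comm]
    exact hξ.trans_le (by gcongr; exact min_le_left _ _)
  have hξ₀ : ξ ≠ 0 := by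
    rintro rfl
    rw [zero_sub, norm_neg] at hξ
    nlinarith [min_le_right c (1 / 2)]
  refine Θ'.zero_on_m ξ ?_ hξ₀
  simpa only [hrescale] using Θ'.cone_m ‖ζ‖ _ hξC

end Cones

section Comparison

variable {χ : ℝ → ℝ} {Θ Θ' : Polarization} {p q : ℝ}

lemma exists_abs_anisoSymbol_sub_le_of_notMem_Cp (hχ : ChiOK χ) (h : PolLt Θ' Θ) (hq₁ : -1 ≤ q)
    (hq₀ : q ≤ 0) : ∃ C : ℝ≥0, ∀ ξ, ∀ ζ ∉ Θ.Cp,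
      |anisoSymbol χ Θ' 1 0 ξ - anisoSymbol χ Θ' 1 0 ζ| ≤
        C * (1 + ‖ξ - ζ‖) ^ (1 - q) * (1 + ‖ζ‖) ^ q := by
  obtain ⟨L, hL⟩ := exists_lipschitzWith_anisoSymbol hχ Θ' le_rfl zero_le_one
  obtain ⟨L₀, hL₀⟩ := exists_abs_anisoSymbol_sub_le_div hχ Θ' 1
  obtain ⟨c, hc, hc₂, hcone⟩ := h.exists_angular_true_eq_zero_of_norm_sub_lt
  refine ⟨L₀ + L * Real.toNNReal (c ^ q), fun ξ ζ hζ => ?_⟩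
  have hY : 1 ≤ 1 + ‖ξ - ζ‖ := le_add_of_nonneg_right (norm_nonneg _)
  have hZ : 1 ≤ 1 + ‖ζ‖ := le_add_of_nonneg_right (norm_nonneg _)
  rw [NNReal.coe_add, NNReal.coe_mul, Real.coe_toNNReal _ (by positivity), add_mul, add_mul]
  rcases lt_or_ge ‖ξ - ζ‖ (c * ‖ζ‖) with hnear | hfar
  · have hYpow : ‖ξ - ζ‖ ≤ (1 + ‖ξ - ζ‖) ^ (1 - q) :=
      (le_add_of_nonneg_left zero_le_one).trans (Real.self_le_rpow_of_one_le hY (by linarith))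
    have hZpow : (1 + ‖ζ‖)⁻¹ ≤ (1 + ‖ζ‖) ^ q := by
      rw [← Real.rpow_neg_one]
      exact Real.rpow_le_rpow_of_exponent_le hZ hq₁
    refine le_add_of_le_of_nonneg ?_ (by positivity)
    calc _ ≤ L₀ * (‖ξ - ζ‖ / (1 + ‖ζ‖)) :=
          hL₀ ξ ζ (hcone ζ hζ ξ hnear) (h.angular_true_eq_zero hζ) (by nlinarith [norm_nonneg ζ])
      _ = L₀ * ‖ξ - ζ‖ * (1 + ‖ζ‖)⁻¹ := by ring
      _ ≤ L₀ * (1 + ‖ξ - ζ‖) ^ (1 - q) * (1 + ‖ζ‖) ^ q := by gcongr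
  · refine le_add_of_nonneg_of_le (by positivity) ?_
    calc _ ≤ L * ‖ξ - ζ‖ := hL.norm_sub_le ξ ζ
      _ ≤ L * (1 + ‖ξ - ζ‖) := by gcongr; linarith
      _ = L * ((1 + ‖ξ - ζ‖) ^ (1 - q) * (1 + ‖ξ - ζ‖) ^ q) := by
        rw [← Real.rpow_add (by positivity), sub_add_cancel, Real.rpow_one]
      _ ≤ L * ((1 + ‖ξ - ζ‖) ^ (1 - q) * (c * (1 + ‖ζ‖)) ^ q) := by
        gcongr L * (_ * ?_)
        exact Real.rpow_le_rpow_of_nonpos (by positivity) (by linarith) hq₀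
      _ = L * c ^ q * (1 + ‖ξ - ζ‖) ^ (1 - q) * (1 + ‖ζ‖) ^ q := by
        rw [Real.mul_rpow hc.le (by positivity)]
        ring

theorem incrementBound_anisoSymbol (hχ : ChiOK χ) (h : PolLt Θ' Θ) (hp : 0 ≤ p) (hq₁ : -1 < q)
    (hq₀ : q ≤ 0) : IncrementBound (anisoSymbol χ Θ' 1 0) (anisoSymbol χ Θ p q) := by
  obtain ⟨L, hL⟩ := exists_lipschitzWith_anisoSymbol hχ Θ' le_rfl zero_le_one
  obtain ⟨C, hC⟩ := exists_abs_anisoSymbol_sub_le_of_notMem_Cp hχ h hq₁.le hq₀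
  refine ⟨2 * L + 8 * C, 1 - q, by linarith, fun ξ ζ => ?_⟩
  have hm₀ : 0 ≤ anisoSymbol χ Θ p q ζ := anisoSymbol_nonneg
  rw [add_mul, add_mul]
  by_cases hζ : ζ ∈ Θ.Cp
  · have hm := half_le_anisoSymbol_of_mem_Cp (q := q) hχ hp hζ
    have hY : ‖ξ - ζ‖ ≤ (1 + ‖ξ - ζ‖) ^ (1 - q) :=
      (le_add_of_nonneg_left zero_le_one).trans <|
        Real.self_le_rpow_of_one_le (le_add_of_nonneg_right (norm_nonneg _)) (by linarith)
    refine le_add_of_le_of_nonneg ?_ (by positivity)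
    calc _ ≤ L * ‖ξ - ζ‖ := hL.norm_sub_le ξ ζ
      _ ≤ L * (1 + ‖ξ - ζ‖) ^ (1 - q) * (2 * anisoSymbol χ Θ p q ζ) := by
        rw [mul_assoc]
        gcongr
        exact hY.trans (le_mul_of_one_le_right (by positivity) (by linarith))
      _ = 2 * L * (1 + ‖ξ - ζ‖) ^ (1 - q) * anisoSymbol χ Θ p q ζ := by ring
  · have hm := rpow_one_add_norm_div_eight_le_anisoSymbol (Θ := Θ) (ξ := ζ) hχ hq₁.le hq₀
      (hq₀.trans hp)
    refine le_add_of_nonneg_of_le (by positivity) ?_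
    calc _ ≤ C * (1 + ‖ξ - ζ‖) ^ (1 - q) * (1 + ‖ζ‖) ^ q := hC ξ ζ hζ
      _ ≤ C * (1 + ‖ξ - ζ‖) ^ (1 - q) * (8 * anisoSymbol χ Θ p q ζ) := by
        gcongr
        linarith
      _ = 8 * C * (1 + ‖ξ - ζ‖) ^ (1 - q) * anisoSymbol χ Θ p q ζ := by ring

lemma one_le_sq_add_sq_add_two_mul {a a₁ a₂ : ℝ} (ha : 0 < a) (ha₁ : a⁻¹ ≤ a₁) (ha₂ : a⁻¹ ≤ a₂)
    (t : ℝ) :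
    1 ≤ (a * t) ^ 2 + (1 - t) ^ 2 + 2 * ((a₁ * t) ^ 2 + (a₂ * (1 - t)) ^ 2) := by
  have hinv : 0 < a⁻¹ := inv_pos.2 ha
  have hmain : 1 ≤ (a * t) ^ 2 + (1 - t) ^ 2 + a⁻¹ ^ 2 := by
    nlinarith [sq_nonneg (a * t - a⁻¹), mul_inv_cancel₀ ha.ne', sq_nonneg t]
  have h₁ := mul_le_mul_of_nonneg_right (pow_le_pow_left₀ hinv.le ha₁ 2) (sq_nonneg t)
  have h₂ := mul_le_mul_of_nonneg_right (pow_le_pow_left₀ hinv.le ha₂ 2) (sq_nonneg (1 - t))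
  nlinarith [mul_nonneg (sq_nonneg a⁻¹) (sq_nonneg (2 * t - 1))]

lemma sum_anisoCoeff_sq_le (h : PolLt Θ' Θ) (hq : -1 ≤ q) (hqp : q ≤ p) (n : ℕ) (ξ : ℝ × ℝ) :
    ∑ σ, anisoCoeff χ Θ' 1 0 (n, σ) ξ ^ 2 ≤
      ∑ σ, anisoCoeff χ Θ 1 0 (n, σ) ξ ^ 2 + 2 * ∑ σ, anisoCoeff χ Θ p q (n, σ) ξ ^ 2 := by
  rcases n with _ | n
  · simpa [anisoCoeff, psiLP_zero] using by positivity
  rcases eq_or_ne ξ 0 with rfl | hξ₀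
  · simp only [sum_anisoCoeff_succ_sq, dyadicBump_succ_en_zero]
    simp
  simp only [sum_anisoCoeff_succ_sq, one_mul, zero_mul, Real.rpow_zero, Real.rpow_natCast]
  rw [← mul_assoc, ← add_mul]
  refine mul_le_mul_of_nonneg_right ?_ (sq_nonneg _)
  by_cases hξ : ξ ∈ Θ.Cp
  · have hα' : Θ'.angular true ξ ∈ Set.Icc (0 : ℝ) 1 := Θ'.angular_mem_Icc true ξ
    have hpow : (1 : ℝ) ≤ (2 ^ (n + 1)) ^ 2 := one_le_pow₀ (one_le_pow₀ one_le_two)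
    rw [Θ.angular_true_eq_one hξ hξ₀]
    nlinarith [mul_nonneg hα'.1 (sub_nonneg.2 hα'.2), sq_nonneg ((2 : ℝ) ^ (p * (n + 1 : ℕ)))]
  · have hweight (s : ℝ) (hs : -1 ≤ s) : ((2 : ℝ) ^ (n + 1))⁻¹ ≤ 2 ^ (s * (n + 1 : ℕ)) := by
      rw [← Real.rpow_natCast, ← Real.rpow_neg zero_le_two, ← neg_one_mul]
      gcongr
      exact one_le_two
    rw [h.angular_true_eq_zero hξ, mul_zero, sub_zero, one_pow, zero_pow two_ne_zero, zero_add]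
    exact one_le_sq_add_sq_add_two_mul (by positivity) (hweight p (hq.trans hqp)) (hweight q hq) _

lemma anisoSymbol_le_add (hχ : ChiOK χ) (h : PolLt Θ' Θ) (hq : -1 ≤ q) (hqp : q ≤ p)
    (ξ : ℝ × ℝ) :
    anisoSymbol χ Θ' 1 0 ξ ≤ anisoSymbol χ Θ 1 0 ξ + 2 * anisoSymbol χ Θ p q ξ := by
  have hA : 0 ≤ anisoSymbol χ Θ 1 0 ξ := anisoSymbol_nonneg
  have hm : 0 ≤ anisoSymbol χ Θ p q ξ := anisoSymbol_nonneg
  refine (pow_le_pow_iff_left₀ anisoSymbol_nonneg (by positivity) two_ne_zero).1 ?_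
  have hsq : anisoSymbol χ Θ' 1 0 ξ ^ 2 ≤
      anisoSymbol χ Θ 1 0 ξ ^ 2 + 2 * anisoSymbol χ Θ p q ξ ^ 2 := by
    rw [anisoSymbol_sq hχ, anisoSymbol_sq hχ, anisoSymbol_sq hχ, Finset.mul_sum,
      ← Finset.sum_add_distrib]
    exact Finset.sum_le_sum fun n _ => sum_anisoCoeff_sq_le h hq hqp n ξ
  nlinarith [mul_nonneg hA hm]

lemma symbolNorm_le_add_two_mul {b b' m : ℝ × ℝ → ℝ} (hb : Measurable b) (hm : Measurable m)
    (hle : ∀ ξ, |b' ξ| ≤ b ξ + 2 * m ξ) {v : ℝ × ℝ → ℂ} (hv : Integrable v) :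
    symbolNorm b' v ≤ symbolNorm b v + 2 * symbolNorm m v := by
  have hmeas {a : ℝ × ℝ → ℝ} (ha : Measurable a) :
      AEStronglyMeasurable (fun ξ => (a ξ : ℂ) * FT v ξ) volume :=
    ((Complex.measurable_ofReal.comp ha).mul (continuous_FT hv).measurable).aestronglyMeasurable
  have hsum (ξ : ℝ × ℝ) : (b ξ : ℂ) * FT v ξ + (2 : ℝ) • ((m ξ : ℂ) * FT v ξ) =
      (b ξ + 2 * m ξ : ℝ) * FT v ξ := by
    rw [Complex.real_smul]
    push_cast
    ring
  calc symbolNorm b' v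
      ≤ eLpNorm ((fun ξ => (b ξ : ℂ) * FT v ξ) + (2 : ℝ) • fun ξ => (m ξ : ℂ) * FT v ξ)
          2 volume := by
        refine eLpNorm_mono fun ξ => ?_
        simp only [Pi.add_apply, Pi.smul_apply, hsum, norm_mul, Complex.norm_real, Real.norm_eq_abs]
        exact mul_le_mul_of_nonneg_right ((hle ξ).trans (le_abs_self _)) (norm_nonneg _)
    _ ≤ symbolNorm b v + eLpNorm ((2 : ℝ) • fun ξ => (m ξ : ℂ) * FT v ξ) 2 volume :=
        eLpNorm_add_le (hmeas hb) ((hmeas hm).const_smul 2) one_le_two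
    _ = symbolNorm b v + 2 * symbolNorm m v := by
        rw [eLpNorm_const_smul, Real.enorm_eq_ofReal zero_le_two, ENNReal.ofReal_ofNat]
        rfl

lemma symbolNorm_anisoSymbol_le_add (hχ : ChiOK χ) (h : PolLt Θ' Θ) (hq : -1 ≤ q) (hqp : q ≤ p)
    {v : ℝ × ℝ → ℂ} (hv : Integrable v) :
    symbolNorm (anisoSymbol χ Θ' 1 0) v ≤
      symbolNorm (anisoSymbol χ Θ 1 0) v + 2 * symbolNorm (anisoSymbol χ Θ p q) v :=
  symbolNorm_le_add_two_mul (measurable_anisoSymbol hχ Θ 1 0) (measurable_anisoSymbol hχ Θ p q)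
    (fun ξ => (abs_of_nonneg anisoSymbol_nonneg).trans_le (anisoSymbol_le_add hχ h hq hqp ξ)) hv

end Comparison

section Estimates

variable {χ : ℝ → ℝ} {Θ Θ' : Polarization} {p q : ℝ} {ι : Type*} [Fintype ι]
  {W : ι → ℝ × ℝ → ℂ} {A : ℝ≥0}

lemma hasLinearGrowth_anisoSymbol (hχ : ChiOK χ) (Θ : Polarization) (hp : p ≤ 1) (hq : q ≤ 1) :
    HasLinearGrowth (anisoSymbol χ Θ p q) :=
  let ⟨_, hL⟩ := exists_lipschitzWith_anisoSymbol hχ Θ hp hq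
  .of_lipschitzWith hL

theorem exists_ellTwo_anorm_mul_le (hχ : ChiOK χ) (h : PolLt Θ' Θ) (hp : 0 ≤ p) (hq₁ : -1 < q)
    (hq₀ : q ≤ 0) (hW : ∀ i, ContDiffCompact 3 (W i))
    (hWA : ∀ x, ∑ i, ‖W i x‖ₑ ^ 2 ≤ (A : ℝ≥0∞) ^ 2) :
    ∃ C : ℝ≥0, ∀ u, ContDiffCompact 3 u →
      ellTwo (fun i => anorm χ Θ' 1 0 fun x => W i x * u x) ≤
        A * anorm χ Θ 1 0 u + C * anorm χ Θ p q u := by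
  obtain ⟨C, hC⟩ := exists_ellTwo_symbolNorm_mul_le
    (hasLinearGrowth_anisoSymbol hχ Θ' le_rfl zero_le_one) (measurable_anisoSymbol hχ Θ p q)
    (incrementBound_anisoSymbol hχ h hp hq₁ hq₀) hW hWA
  refine ⟨2 * A + C, fun u hu => ?_⟩
  simp only [anorm_eq_symbolNorm hχ _ _ _ hu.integrable,
    anorm_eq_symbolNorm hχ _ _ _ ((hW _).mul hu).integrable]
  refine (hC u hu).trans ?_
  grw [symbolNorm_anisoSymbol_le_add hχ h hq₁.le (hq₀.trans hp) hu.integrable]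
  push_cast
  exact le_of_eq (by ring)

theorem exists_anorm_sum_mul_le (hχ : ChiOK χ) (h : PolLt Θ' Θ) (hp : 0 ≤ p) (hq₁ : -1 < q)
    (hq₀ : q ≤ 0) (hW : ∀ i, ContDiffCompact 3 (W i))
    (hWA : ∀ x, ∑ i, ‖W i x‖ₑ ^ 2 ≤ (A : ℝ≥0∞) ^ 2) :
    ∃ C : ℝ≥0, ∀ v : ι → ℝ × ℝ → ℂ, (∀ i, ContDiffCompact 3 (v i)) →
      anorm χ Θ' 1 0 (fun x => ∑ i, W i x * v i x) ≤
        A * ellTwo (fun i => anorm χ Θ 1 0 (v i)) + C * ∑ i, anorm χ Θ p q (v i) := by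
  obtain ⟨C, hC⟩ := exists_symbolNorm_sum_mul_le
    (hasLinearGrowth_anisoSymbol hχ Θ' le_rfl zero_le_one) (measurable_anisoSymbol hχ Θ p q)
    (incrementBound_anisoSymbol hχ h hp hq₁ hq₀) hW hWA
  refine ⟨2 * A + C, fun v hv => ?_⟩
  have hint (i : ι) := (hv i).integrable (μ := volume)
  rw [anorm_eq_symbolNorm hχ _ _ _
    (integrable_finsetSum _ fun i _ => ((hW i).mul (hv i)).integrable)]
  simp only [anorm_eq_symbolNorm hχ _ _ _ (hint _)]
  have hcomp : ellTwo (fun i => symbolNorm (anisoSymbol χ Θ' 1 0) (v i)) ≤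
      ellTwo (fun i => symbolNorm (anisoSymbol χ Θ 1 0) (v i)) +
        2 * ∑ i, symbolNorm (anisoSymbol χ Θ p q) (v i) := by
    rw [Finset.mul_sum]
    exact (ellTwo_mono fun i => symbolNorm_anisoSymbol_le_add hχ h hq₁.le (hq₀.trans hp)
      (hint i)).trans ((ellTwo_add_le _ _).trans (add_le_add_right (ellTwo_le_sum _) _))
  refine (hC v hv).trans ?_
  grw [hcomp]
  push_cast
  exact le_of_eq (by ring)

end Estimates

/-! ### Multiplicity of the supports -/

section Multiplicity

variable {ι α : Type*}

/-- The intersection multiplicity of the supports of the functions `g i`: the largest number of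
indices `i` for which `g i` is nonzero at a common point. -/
def intersectionMultiplicity (g : ι → α → ℝ) : ℕ := ⨆ x, {i | x ∈ support (g i)}.ncard

variable {g : ι → α → ℝ}

lemma intersectionMultiplicity_le {N : ℕ} (hN : ∀ x, {i | x ∈ support (g i)}.ncard ≤ N) :
    intersectionMultiplicity g ≤ N :=
  ciSup_le' hN

lemma ncard_le_intersectionMultiplicity [Finite ι] (x : α) :
    {i | x ∈ support (g i)}.ncard ≤ intersectionMultiplicity g := by
  refine le_ciSup (f := fun x => {i | x ∈ support (g i)}.ncard) ⟨Nat.card ι, ?_⟩ x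
  rintro _ ⟨y, rfl⟩
  exact Set.ncard_le_card _

lemma eq_zero_of_intersectionMultiplicity_eq_zero [Finite ι] (hg : intersectionMultiplicity g = 0)
    (i : ι) (x : α) : g i x = 0 := by
  have hempty := Nat.le_zero.1 ((ncard_le_intersectionMultiplicity x).trans_eq hg)
  by_contra hi
  exact ((Set.ncard_eq_zero (Set.toFinite _)).1 hempty).le hi

variable [Fintype ι]

lemma sq_sum_le_ncard_support_mul_sum_sq (a : ι → ℝ) :
    (∑ i, a i) ^ 2 ≤ (support a).ncard * ∑ i, a i ^ 2 := by
  classical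
  have hcard : (support a).ncard = (Finset.univ.filter fun i => a i ≠ 0).card := by
    rw [← Set.ncard_coe_finset, Finset.coe_filter_univ]
    rfl
  rw [hcard, ← Finset.sum_filter_ne_zero]
  refine sq_sum_le_card_mul_sum_sq.trans ?_
  gcongr
  exact Finset.filter_subset _ _

lemma sq_sum_le_intersectionMultiplicity_mul (g : ι → α → ℝ) (x : α) :
    (∑ i, g i x) ^ 2 ≤ intersectionMultiplicity g * ∑ i, g i x ^ 2 := by
  refine (sq_sum_le_ncard_support_mul_sum_sq fun i => g i x).trans ?_
  gcongr
  exact ncard_le_intersectionMultiplicity (g := g) x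

end Multiplicity

section Weights

lemma exists_contDiff_eq_inv (n : ℕ∞) {a b : ℝ} (ha : 0 < a) (hab : a < b) :
    ∃ h : ℝ → ℝ, ContDiff ℝ n h ∧ (∀ t, b ≤ t → h t = t⁻¹) ∧ ∀ t, h t ^ 2 * t ≤ a⁻¹ := by
  set T : ℝ → ℝ := fun t => Real.smoothTransition ((t - a) / (b - a))
  have hT : ContDiff ℝ n T :=
    Real.smoothTransition.contDiff.comp ((contDiff_id.sub contDiff_const).div_const _)
  have hT₀ {t : ℝ} (ht : t ≤ a) : T t = 0 :=
    Real.smoothTransition.zero_of_nonpos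
      (div_nonpos_of_nonpos_of_nonneg (sub_nonpos.2 ht) (sub_nonneg.2 hab.le))
  refine ⟨fun t => T t / t, contDiff_iff_contDiffAt.2 fun t => ?_, fun t ht => ?_, fun t => ?_⟩
  · rcases lt_or_ge t a with hta | hat
    · refine contDiffAt_const (c := (0 : ℝ)).congr_of_eventuallyEq ?_
      filter_upwards [eventually_lt_nhds hta] with s hs
      rw [hT₀ hs.le, zero_div]
    · exact hT.contDiffAt.div contDiffAt_id (ha.trans_le hat).ne'
  · have hT₁ : T t = 1 := Real.smoothTransition.one_of_one_le <| by
      rw [one_le_div (sub_pos.2 hab)]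
      linarith
    simp only [hT₁, one_div]
  · rcases le_or_gt t a with hta | hat
    · simpa [hT₀ hta] using ha.le
    · have ht : 0 < t := ha.trans hat
      calc (T t / t) ^ 2 * t = T t ^ 2 * t⁻¹ := by field_simp
        _ ≤ 1 * a⁻¹ := by
          gcongr
          exact pow_le_one₀ (Real.smoothTransition.nonneg _) (Real.smoothTransition.le_one _)
        _ = a⁻¹ := one_mul _

variable {ι E : Type*} [Fintype ι] [NormedAddCommGroup E] [NormedSpace ℝ E] {n : ℕ∞}
  {g : ι → E → ℝ}

lemma exists_weights_of_two_le (hg : ∀ i, ContDiff ℝ n (g i))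
    (hN : 2 ≤ intersectionMultiplicity g) :
    ∃ w : ι → E → ℝ, (∀ i, ContDiff ℝ n (w i)) ∧ (∀ i, support (w i) ⊆ support (g i)) ∧
      (∀ x, ∑ i, g i x = 1 → ∑ i, w i x * g i x = 1) ∧
      ∀ x, ∑ i, w i x ^ 2 ≤ (intersectionMultiplicity g : ℝ) ^ 2 := by
  have hN' : (1 : ℝ) < intersectionMultiplicity g := by exact_mod_cast hN
  set N : ℝ := (intersectionMultiplicity g : ℝ)
  have hN₀ : 0 < N := one_pos.trans hN'
  obtain ⟨h, hsmooth, hinv, hbound⟩ := exists_contDiff_eq_inv n (a := (N ^ 2)⁻¹) (b := N⁻¹)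
    (by positivity) (inv_strictAnti₀ hN₀ (lt_self_pow₀ hN' one_lt_two))
  have hG : ContDiff ℝ n fun x => ∑ i, g i x ^ 2 := ContDiff.sum fun i _ => (hg i).pow 2
  refine ⟨fun i x => h (∑ j, g j x ^ 2) * g i x,
    fun i => (hsmooth.comp hG).mul (hg i),
    fun i => support_mul_subset_right _ _, fun x hx => ?_, fun x => ?_⟩
  · have hGN : N⁻¹ ≤ ∑ i, g i x ^ 2 := by
      rw [inv_le_iff_one_le_mul₀' hN₀, ← one_pow 2, ← hx]
      exact sq_sum_le_intersectionMultiplicity_mul g x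
    simp only [mul_assoc, ← sq, ← Finset.mul_sum]
    rw [hinv _ hGN, inv_mul_cancel₀ ((inv_pos.2 hN₀).trans_le hGN).ne']
  · simp only [mul_pow, ← Finset.mul_sum]
    simpa only [inv_inv] using hbound (∑ i, g i x ^ 2)

theorem exists_weights (hg : ∀ i, ContDiff ℝ n (g i)) (hsq : ∀ x, ∑ i, g i x ^ 2 ≤ 1) :
    ∃ w : ι → E → ℝ, (∀ i, ContDiff ℝ n (w i)) ∧ (∀ i, support (w i) ⊆ support (g i)) ∧
      (∀ x, ∑ i, g i x = 1 → ∑ i, w i x * g i x = 1) ∧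
      ∀ x, ∑ i, w i x ^ 2 ≤ (intersectionMultiplicity g : ℝ) ^ 2 := by
  rcases le_or_gt 2 (intersectionMultiplicity g) with hN | hN
  · exact exists_weights_of_two_le hg hN
  have hN₁ : (intersectionMultiplicity g : ℝ) ≤ 1 := by exact_mod_cast Nat.le_of_lt_succ hN
  refine ⟨g, hg, fun i => subset_rfl, fun x hx => ?_, fun x => ?_⟩
  · have hge := sq_sum_le_intersectionMultiplicity_mul g x
    simp only [← sq]
    rw [hx, one_pow] at hge
    exact (hsq x).antisymm (hge.trans (mul_le_of_le_one_left (by positivity) hN₁))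
  · rcases Nat.eq_zero_or_pos (intersectionMultiplicity g) with hN₀ | hN₀
    · simp [eq_zero_of_intersectionMultiplicity_eq_zero hN₀]
    · exact (hsq x).trans (one_le_pow₀ (by exact_mod_cast hN₀))

end Weights

section Families

variable {χ : ℝ → ℝ} {Θ Θ' : Polarization} {p q : ℝ} {ι : Type*} [Fintype ι]
  {g : ι → ℝ × ℝ → ℝ}

lemma sum_enorm_ofReal_sq_le {a : ι → ℝ} {A : ℝ≥0} (h : ∑ i, a i ^ 2 ≤ (A : ℝ) ^ 2) :
    ∑ i, ‖(a i : ℂ)‖ₑ ^ 2 ≤ (A : ℝ≥0∞) ^ 2 := by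
  have hsq (i : ι) : ‖(a i : ℂ)‖ₑ ^ 2 = ENNReal.ofReal (a i ^ 2) := by
    rw [enorm_ofReal_complex, ← enorm_pow, Real.enorm_eq_ofReal (sq_nonneg _)]
  simp only [hsq]
  rw [← ENNReal.ofReal_sum_of_nonneg fun i _ => sq_nonneg _]
  exact (ENNReal.ofReal_le_ofReal h).trans_eq (by simp [ENNReal.ofReal_pow])

lemma sum_sq_le_one {α : Type*} {g : ι → α → ℝ} {Q : Set α} (hg₀ : ∀ i x, 0 ≤ g i x)
    (hgQ : ∀ i, support (g i) ⊆ Q) (hsum : ∀ x ∈ Q, ∑ i, g i x ≤ 1) (x : α) :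
    ∑ i, g i x ^ 2 ≤ 1 := by
  by_cases hx : x ∈ Q
  · calc ∑ i, g i x ^ 2 ≤ (∑ i, g i x) ^ 2 :=
          Finset.sum_sq_le_sq_sum_of_nonneg fun i _ => hg₀ i x
      _ ≤ 1 := pow_le_one₀ (Finset.sum_nonneg fun i _ => hg₀ i x) (hsum x hx)
  · have hg (i : ι) : g i x = 0 := notMem_support.1 fun hi => hx (hgQ i hi)
    simp [hg]

theorem exists_ellTwo_anorm_le (hχ : ChiOK χ) (h : PolLt Θ' Θ) (hp : 0 ≤ p) (hq₁ : -1 < q)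
    (hq₀ : q ≤ 0) (hg : ∀ i, ContDiffCompact 3 (g i)) (hsq : ∀ x, ∑ i, g i x ^ 2 ≤ 1) :
    ∃ C : ℝ≥0, ∀ u, ContDiffCompact 3 u →
      ellTwo (fun i => anorm χ Θ' 1 0 fun x => (g i x : ℂ) * u x) ≤
        anorm χ Θ 1 0 u + C * anorm χ Θ p q u := by
  simpa using exists_ellTwo_anorm_mul_le (A := 1) hχ h hp hq₁ hq₀ (fun i => (hg i).ofReal)
    fun x => sum_enorm_ofReal_sq_le (by simpa using hsq x)

theorem exists_anorm_le_intersectionMultiplicity_mul (hχ : ChiOK χ) (h : PolLt Θ' Θ) (hp : 0 ≤ p)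
    (hq₁ : -1 < q) (hq₀ : q ≤ 0) (hg : ∀ i, ContDiffCompact 3 (g i))
    (hsq : ∀ x, ∑ i, g i x ^ 2 ≤ 1) :
    ∃ C : ℝ≥0, ∀ u : ℝ × ℝ → ℂ, ContDiffCompact 3 u → (∀ x ∈ support u, ∑ i, g i x = 1) →
      anorm χ Θ' 1 0 u ≤
        intersectionMultiplicity g *
            ellTwo (fun i => anorm χ Θ 1 0 fun x => (g i x : ℂ) * u x) +
          C * ∑ i, anorm χ Θ p q fun x => (g i x : ℂ) * u x := by
  obtain ⟨w, hw, hwg, hwsum, hwsq⟩ := exists_weights (fun i => (hg i).contDiff) hsq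
  have hwc (i : ι) : ContDiffCompact 3 (w i) := ⟨hw i, (hg i).hasCompactSupport.mono (hwg i)⟩
  obtain ⟨C, hC⟩ := exists_anorm_sum_mul_le (A := intersectionMultiplicity g) hχ h hp hq₁ hq₀
    (fun i => (hwc i).ofReal) fun x => sum_enorm_ofReal_sq_le (by exact_mod_cast hwsq x)
  refine ⟨C, fun u hu hone => ?_⟩
  have hrecover : (fun x => ∑ i, (w i x : ℂ) * ((g i x : ℂ) * u x)) = u := by
    ext x
    by_cases hx : u x = 0
    · simp [hx]
    · simp only [← mul_assoc, ← Finset.sum_mul]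
      rw [mul_eq_right₀ hx]
      exact_mod_cast hwsum x (hone x hx)
  simpa only [hrecover, ENNReal.coe_natCast] using hC _ fun i => (hg i).ofReal.mul hu

end Families

theorem statement8_general {χ : ℝ → ℝ} (hχ : ChiOK χ) {p q : ℝ} (hp : 0 ≤ p) (hq₁ : -1 < q)
    (hq₀ : q ≤ 0) {Q R : Set (ℝ × ℝ)} (hQ : Bornology.IsBounded Q) (hR : Bornology.IsBounded R)
    {Θ Θ' : Polarization} (h : PolLt Θ' Θ) {ι : Type*} [Fintype ι] {g : ι → ℝ × ℝ → ℝ}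
    (hg : ∀ i, ContDiff ℝ 3 (g i)) (hg₀ : ∀ i x, 0 ≤ g i x) (hgQ : ∀ i, support (g i) ⊆ Q)
    (hsum : ∀ x ∈ Q, ∑ i, g i x ≤ 1) :
    ∃ C : ℝ≥0,
      (∀ u : ℝ × ℝ → ℂ, ContDiff ℝ 3 u → support u ⊆ R →
        (∑ i, (anorm χ Θ' 1 0 fun x => (g i x : ℂ) * u x) ^ 2) ^ (1 / 2 : ℝ) ≤
          anorm χ Θ 1 0 u + C * anorm χ Θ p q u) ∧
      ((∀ x ∈ R, ∑ i, g i x = 1) → ∀ ν : ℕ, (∀ x, {i | x ∈ support (g i)}.ncard ≤ ν) →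
        ∀ u : ℝ × ℝ → ℂ, ContDiff ℝ 3 u → support u ⊆ R →
          anorm χ Θ' 1 0 u ≤
            ν * (∑ i, (anorm χ Θ 1 0 fun x => (g i x : ℂ) * u x) ^ 2) ^ (1 / 2 : ℝ) +
              C * ∑ i, anorm χ Θ p q fun x => (g i x : ℂ) * u x) := by
  have hgc (i : ι) : ContDiffCompact 3 (g i) := .of_support_subset (hg i) (hgQ i) hQ
  have hsq := sum_sq_le_one hg₀ hgQ hsum
  obtain ⟨C₁, hC₁⟩ := exists_ellTwo_anorm_le hχ h hp hq₁ hq₀ hgc hsq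
  obtain ⟨C₂, hC₂⟩ := exists_anorm_le_intersectionMultiplicity_mul hχ h hp hq₁ hq₀ hgc hsq
  refine ⟨max C₁ C₂, fun u hu huR => ?_, fun hone ν hν u hu huR => ?_⟩
  · refine (hC₁ u (.of_support_subset hu huR hR)).trans ?_
    gcongr
    exact le_max_left _ _
  · refine (hC₂ u (.of_support_subset hu huR hR) fun x hx => hone x (huR hx)).trans ?_
    gcongr
    · exact intersectionMultiplicity_le hν
    · exact le_rfl
    · exact le_max_right _ _

lemma isBounded_Rset (η δ : ℝ) : Bornology.IsBounded (Rset η δ) :=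
  (Metric.isBounded_Ioo _ _).prod (Metric.isBounded_Ioo _ _)

lemma isBounded_Qset (η δ : ℝ) : Bornology.IsBounded (Qset η δ) :=
  (Metric.isBounded_Ioo _ _).prod (Metric.isBounded_Ioo _ _)

/-- Lemma 2.3. For `C^r` functions `g_i` supported in `Q` with
`∑ g_i ≤ 1` on `Q` and polarizations `Θ' < Θ`:
`(∑ ‖g_i u‖²_{Θ'})^{1/2} ≤ C₀‖u‖_Θ + C|u|_Θ`, with `C₀` independent of the family;
and if moreover `∑ g_i ≡ 1` on `R`, then
`‖u‖_{Θ'} ≤ ν(∑ ‖g_i u‖²_Θ)^{1/2} + C ∑ |g_i u|_Θ` where `ν` is the intersection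
multiplicity of the supports. -/
theorem statement8 (r : ℕ) (hr : 3 ≤ r) (η δ ε : ℝ) (hη : 0 < η) (hδ : 0 < δ)
    (hε₁ : 0 < ε) (hε₂ : ε < 1 / 2) (χ : ℝ → ℝ) (hχ : ChiOK χ) :
    ∃ C₀ : ℝ≥0, ∀ (Θ Θ' : Polarization), PolLt Θ' Θ →
      ∀ (I : ℕ) (g : Fin I → (ℝ × ℝ → ℝ)),
        (∀ i, ContDiff ℝ r (g i) ∧ (∀ x, g i x ∈ Set.Icc (0 : ℝ) 1) ∧
          Function.support (g i) ⊆ Qset η δ) →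
        (∀ x ∈ Qset η δ, ∑ i, g i x ≤ 1) →
        ∃ C : ℝ≥0,
          (∀ u : ℝ × ℝ → ℂ, CrSupp r η δ u →
            (∑ i, (anorm χ Θ' 1 0 fun x => (g i x : ℂ) * u x) ^ 2) ^ (1 / 2 : ℝ) ≤
              C₀ * anorm χ Θ 1 0 u + C * anorm χ Θ (1 - ε) (-ε) u) ∧
          ((∀ x ∈ Rset η δ, ∑ i, g i x = 1) →
            ∀ ν : ℕ,
              (∀ x : ℝ × ℝ,
                {i : Fin I | x ∈ Function.support (g i)}.ncard ≤ ν) →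
              ∀ u : ℝ × ℝ → ℂ, CrSupp r η δ u →
                anorm χ Θ' 1 0 u ≤
                  (ν : ℝ≥0∞) *
                      (∑ i, (anorm χ Θ 1 0 fun x => (g i x : ℂ) * u x) ^ 2) ^ (1 / 2 : ℝ) +
                    C * ∑ i, anorm χ Θ (1 - ε) (-ε) fun x => (g i x : ℂ) * u x) := by
  have hr' : (3 : WithTop ℕ∞) ≤ r := by exact_mod_cast hr
  refine ⟨1, fun Θ Θ' h I g hg hsum => ?_⟩
  obtain ⟨C, hC₁, hC₂⟩ := statement8_general hχ (p := 1 - ε) (q := -ε) (by linarith) (by linarith)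
    (by linarith) (isBounded_Qset η δ) (isBounded_Rset η δ) h (fun i => (hg i).1.of_le hr')
    (fun i x => ((hg i).2.1 x).1) (fun i => (hg i).2.2) hsum
  rw [ENNReal.coe_one]
  simp only [one_mul]
  exact ⟨C, fun u hu => hC₁ u (hu.1.of_le hr') hu.2,
    fun hone ν hν u hu => hC₂ hone ν hν u (hu.1.of_le hr') hu.2⟩

end AngleMult
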